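/- arXiv:0709.3541 — 8 statements merged into one kernel-verified Lean document; each statement's English description precedes it below -/
import Mathlib

section
/- Let D be a 2×2 real symmetric positive definite matrix, g ∈ ℝ² a vector with gᵀD⁻¹g ≥ 1, and P > 0. If S* is a 2×2 real positive semidefinite matrix with tr(S*) ≤ P that maximizes the function f(S) = log det(I + D S) − log(1 + gᵀ S g) over all positive semidefinite 2×2 matrices S with tr(S) ≤ P, then S* is not full rank, i.e., det S* = 0 (so S* has rank at most 1). -/
open Matrix

/-!
Suppose `det S ≠ 0`, so that `S` is positive definite and `S + t H` is feasible for every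
symmetric `H` of trace zero and all small `t`. The derivative at `S` of
`f` in direction `H` has the sign of `L(H) = q₀ tr(E H) - N₀ gᵀ H g`, where `N₀ = det (1 + D S)`,
`q₀ = 1 + gᵀ S g` and `E = D + det D • adj S`. Put `B = adj E = adj D + det D • S`; then
`det E = det D * N₀`. Two directions matter.

* For `u ⟂ g` of the same length as `g`, `L(u uᵀ) = q₀ gᵀ B g > 0`.
* For `v = B g`, `L(v vᵀ) = N₀ (gᵀ B g) (det D * q₀ - gᵀ B g) ≤ 0`, because
  `det D * q₀ - gᵀ B g = det D * (1 - gᵀ D⁻¹ g)`.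

Hence `H = |v|² u uᵀ - |g|² v vᵀ` has trace zero and `L(H) > 0`, contradicting maximality.
In the lemmas below `D = !![a, b; b, c]`, `S = !![p, q; q, r]`, `g = ![x, y]`.
-/

lemma posSemidef_fin_two {p q r : ℝ} (hp : 0 < p) (h : 0 ≤ p * r - q ^ 2) :
    (!![p, q; q, r] : Matrix (Fin 2) (Fin 2) ℝ).PosSemidef := by
  refine PosSemidef.of_dotProduct_mulVec_nonneg ?_ fun z => ?_
  · ext i j
    fin_cases i <;> fin_cases j <;> simp
  · have key : 0 ≤ p * (z 0 * (p * z 0 + q * z 1) + z 1 * (q * z 0 + r * z 1)) := by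
      nlinarith [sq_nonneg (p * z 0 + q * z 1), mul_nonneg h (sq_nonneg (z 1))]
    have := nonneg_of_mul_nonneg_right key hp
    simpa [dotProduct, mulVec, Fin.sum_univ_two] using this

/-- A trace-zero direction `!![h, k; k, -h]` along which the objective increases to first order.
The conclusion is positivity of `L(H) = q₀ tr(E H) - N₀ gᵀ H g`. -/
lemma exists_ascent_direction {a b c p q r x y : ℝ} (hδ : 0 < a * c - b ^ 2)
    (hg : a * c - b ^ 2 ≤ c * x ^ 2 - 2 * b * x * y + a * y ^ 2)
    (hN : 0 < 1 + (a * p + 2 * b * q + c * r) + (a * c - b ^ 2) * (p * r - q ^ 2))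
    (hq : 0 < 1 + (p * x ^ 2 + 2 * q * x * y + r * y ^ 2)) :
    ∃ h k : ℝ,
      0 < (a * h + 2 * b * k - c * h + (a * c - b ^ 2) * (r * h - p * h - 2 * q * k)) *
          (1 + (p * x ^ 2 + 2 * q * x * y + r * y ^ 2)) -
        (1 + (a * p + 2 * b * q + c * r) + (a * c - b ^ 2) * (p * r - q ^ 2)) *
          (h * x ^ 2 + 2 * k * x * y - h * y ^ 2) := by
  obtain ⟨v, hv⟩ : ∃ v, v = (c + (a * c - b ^ 2) * p) * x + (-b + (a * c - b ^ 2) * q) * y :=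
    ⟨_, rfl⟩
  obtain ⟨w, hw⟩ : ∃ w, w = (-b + (a * c - b ^ 2) * q) * x + (a + (a * c - b ^ 2) * r) * y :=
    ⟨_, rfl⟩
  -- `β` is `gᵀ B g`.
  obtain ⟨β, hβ⟩ : ∃ β, β = x * v + y * w := ⟨_, rfl⟩
  obtain ⟨Q, hQ⟩ : ∃ Q, Q = 1 + (p * x ^ 2 + 2 * q * x * y + r * y ^ 2) := ⟨_, rfl⟩
  obtain ⟨N, hN'⟩ : ∃ N, N = 1 + (a * p + 2 * b * q + c * r) +
    (a * c - b ^ 2) * (p * r - q ^ 2) := ⟨_, rfl⟩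
  rw [← hQ] at hq
  rw [← hN'] at hN
  have hβQ : 0 ≤ β - (a * c - b ^ 2) * Q := by
    rw [hβ, hv, hw, hQ]; linarith
  have hβ0 : 0 < β := by nlinarith [mul_pos hδ hq]
  have hvw : 0 < v ^ 2 + w ^ 2 := by
    by_contra hcon
    have h1 : v = 0 := by nlinarith [sq_nonneg v, sq_nonneg w]
    have h2 : w = 0 := by nlinarith [sq_nonneg v, sq_nonneg w]
    rw [h1, h2] at hβ
    linarith
  refine ⟨(v ^ 2 + w ^ 2) * y ^ 2 - (x ^ 2 + y ^ 2) * v ^ 2,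
    -(v ^ 2 + w ^ 2) * x * y - (x ^ 2 + y ^ 2) * v * w, ?_⟩
  have hpos : 0 < (v ^ 2 + w ^ 2) * Q * β +
      (x ^ 2 + y ^ 2) * N * β * (β - (a * c - b ^ 2) * Q) := by positivity
  rw [← hQ, ← hN']
  have e1 : (a + (a * c - b ^ 2) * r) * y ^ 2 - 2 * (b - (a * c - b ^ 2) * q) * x * y
      + (c + (a * c - b ^ 2) * p) * x ^ 2 = β := by
    rw [hβ, hv, hw]; ring
  have e2 : (a + (a * c - b ^ 2) * r) * v ^ 2 + 2 * (b - (a * c - b ^ 2) * q) * v * w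
      + (c + (a * c - b ^ 2) * p) * w ^ 2 = (a * c - b ^ 2) * N * β := by
    rw [hβ, hN', hv, hw]; ring
  have e3 : x * v + y * w = β := hβ.symm
  refine hpos.trans_eq ?_
  linear_combination (-(v ^ 2 + w ^ 2) * Q) * e1 + (x ^ 2 + y ^ 2) * Q * e2
    - (x ^ 2 + y ^ 2) * N * (x * v + y * w + β) * e3

/-- If `D` is a 2×2 real symmetric positive definite matrix, `g ∈ ℝ²` satisfies
`gᵀ D⁻¹ g ≥ 1`, `P > 0`, and `S` is a positive semidefinite matrix with `tr S ≤ P`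
maximizing `f(T) = log det(I + D T) − log(1 + gᵀ T g)` over all positive semidefinite
matrices with trace at most `P`, then `S` is not full rank, i.e. `det S = 0`. -/
theorem stmt0 (D S : Matrix (Fin 2) (Fin 2) ℝ) (g : Fin 2 → ℝ) (P : ℝ)
    (hD : D.PosDef) (hg : 1 ≤ g ⬝ᵥ D⁻¹.mulVec g) (hP : 0 < P)
    (hS : S.PosSemidef) (htr : S.trace ≤ P)
    (hmax : ∀ T : Matrix (Fin 2) (Fin 2) ℝ, T.PosSemidef → T.trace ≤ P →
      Real.log ((1 + D * T).det) - Real.log (1 + g ⬝ᵥ T.mulVec g) ≤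
        Real.log ((1 + D * S).det) - Real.log (1 + g ⬝ᵥ S.mulVec g)) :
    S.det = 0 := by
  by_contra hne
  have hSdet : 0 < S.det := lt_of_le_of_ne hS.det_nonneg (Ne.symm hne)
  have hDdet : 0 < D.det := hD.det_pos
  have hD10 : D 1 0 = D 0 1 := by simpa using hD.1.apply 0 1
  have hS10 : S 1 0 = S 0 1 := by simpa using hS.1.apply 0 1
  have ha : 0 < D 0 0 := hD.diag_pos
  have hp0 : 0 ≤ S 0 0 := hS.diag_nonneg
  have hq0 : 0 ≤ g ⬝ᵥ S.mulVec g := by simpa using hS.dotProduct_mulVec_nonneg g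
  rw [Matrix.inv_def, Matrix.adjugate_fin_two, Ring.inverse_eq_inv'] at hg
  have eD : D = !![D 0 0, D 0 1; D 0 1, D 1 1] := by
    conv_lhs => rw [Matrix.eta_fin_two D, hD10]
  have eS : S = !![S 0 0, S 0 1; S 0 1, S 1 1] := by
    conv_lhs => rw [Matrix.eta_fin_two S, hS10]
  generalize D 0 0 = a at *
  generalize D 0 1 = b at *
  generalize D 1 1 = c at *
  generalize S 0 0 = p at *
  generalize S 0 1 = q at *
  generalize S 1 1 = r at *
  subst eD eS
  have hquad (p q r : ℝ) : g ⬝ᵥ (!![p, q; q, r] : Matrix (Fin 2) (Fin 2) ℝ).mulVec g =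
      p * g 0 ^ 2 + 2 * q * g 0 * g 1 + r * g 1 ^ 2 := by
    simp [dotProduct, mulVec, Fin.sum_univ_two]; ring
  have hdet (p q r : ℝ) : (1 + !![a, b; b, c] * !![p, q; q, r]).det =
      1 + (a * p + 2 * b * q + c * r) + (a * c - b ^ 2) * (p * r - q ^ 2) := by
    simp [Matrix.det_fin_two]; ring
  have hδ : 0 < a * c - b ^ 2 := by
    rw [Matrix.det_fin_two_of] at hDdet; linarith
  have hs : 0 < p * r - q ^ 2 := by
    rw [Matrix.det_fin_two_of] at hSdet; linarith
  have hp : 0 < p := by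
    rcases hp0.eq_or_lt with h | h
    · rw [← h] at hs; nlinarith [sq_nonneg q]
    · exact h
  have hg' : a * c - b ^ 2 ≤ c * g 0 ^ 2 - 2 * b * g 0 * g 1 + a * g 1 ^ 2 := by
    rw [Matrix.smul_mulVec, dotProduct_smul, Matrix.det_fin_two_of, hD10, smul_eq_mul,
      hquad, show a * c - b * b = a * c - b ^ 2 by ring, inv_mul_eq_div, le_div_iff₀ hδ] at hg
    linarith
  rw [hquad] at hq0
  have htrDS : 0 ≤ a * p + 2 * b * q + c * r := by
    have : 0 ≤ (a * p) * (a * p + 2 * b * q + c * r) := by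
      nlinarith [sq_nonneg (a * p + b * q), mul_nonneg hδ.le hs.le,
        mul_nonneg hδ.le (sq_nonneg q), mul_nonneg hs.le (sq_nonneg b)]
    exact nonneg_of_mul_nonneg_right this (mul_pos ha hp)
  have hN : 0 < 1 + (a * p + 2 * b * q + c * r) + (a * c - b ^ 2) * (p * r - q ^ 2) := by
    positivity
  have hQ : 0 < 1 + (p * g 0 ^ 2 + 2 * q * g 0 * g 1 + r * g 1 ^ 2) := by linarith
  obtain ⟨h, k, hL⟩ := exists_ascent_direction hδ hg' hN hQ
  generalize g 0 = x at *
  generalize g 1 = y at *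
  -- A continuous function positive at `t = 0` stays positive for small `t > 0`.
  have ev (φ : ℝ → ℝ) (hφ : Continuous φ) (h0 : 0 < φ 0) :
      ∀ᶠ t in nhdsWithin (0 : ℝ) (Set.Ioi 0), 0 < φ t :=
    ((hφ.tendsto 0).eventually (lt_mem_nhds h0)).filter_mono nhdsWithin_le_nhds
  have e1 := ev (fun t => p + t * h) (by fun_prop) (by simpa using hp)
  have e2 := ev (fun t => (p + t * h) * (r - t * h) - (q + t * k) ^ 2) (by fun_prop)
    (by simpa using hs)
  have e3 := ev (fun t => 1 + (a * (p + t * h) + 2 * b * (q + t * k) + c * (r - t * h)) +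
    (a * c - b ^ 2) * ((p + t * h) * (r - t * h) - (q + t * k) ^ 2)) (by fun_prop)
    (by simpa using hN)
  have e4 := ev (fun t => 1 + ((p + t * h) * x ^ 2 + 2 * (q + t * k) * x * y +
    (r - t * h) * y ^ 2)) (by fun_prop) (by simpa using hQ)
  -- The difference quotient of `N(t) q₀ - N₀ q(t)`, whose value at `0` is `L(H)`.
  have e5 := ev (fun t => (a * h + 2 * b * k - c * h +
      (a * c - b ^ 2) * (r * h - p * h - 2 * q * k)) *
        (1 + (p * x ^ 2 + 2 * q * x * y + r * y ^ 2)) -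
      (1 + (a * p + 2 * b * q + c * r) + (a * c - b ^ 2) * (p * r - q ^ 2)) *
        (h * x ^ 2 + 2 * k * x * y - h * y ^ 2) +
      t * ((a * c - b ^ 2) * (-h ^ 2 - k ^ 2) *
        (1 + (p * x ^ 2 + 2 * q * x * y + r * y ^ 2)))) (by fun_prop)
    (by simpa only [zero_mul, add_zero] using hL)
  obtain ⟨t, h1, h2, h3, h4, h5, ht⟩ :=
    (e1.and (e2.and (e3.and (e4.and (e5.and self_mem_nhdsWithin))))).exists
  have ht : 0 < t := ht
  have hm := hmax !![p + t * h, q + t * k; q + t * k, r - t * h]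
    (posSemidef_fin_two h1 h2.le) (by
      simp only [Matrix.trace_fin_two_of] at htr ⊢; linarith)
  rw [hdet, hdet, hquad, hquad, ← Real.log_div h3.ne' h4.ne', ← Real.log_div hN.ne' hQ.ne',
    Real.log_le_log_iff (div_pos h3 h4) (div_pos hN hQ), div_le_div_iff₀ h4 hQ] at hm
  have := mul_pos ht h5
  linarith
end

section
/- Let H be an invertible 2×2 real matrix, g ∈ ℝ² a nonzero vector, and P > 0. Let λ₁ be the largest eigenvalue of (I + P·g gᵀ)^{-1/2} (I + P·HᵀH) (I + P·g gᵀ)^{-1/2}, and let g⊥ ∈ ℝ² be any unit vector with gᵀ g⊥ = 0. Then λ₁ ≥ 1 + P·‖H g⊥‖², and in particular λ₁ > 1. -/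
open Matrix

/-!
By the Rayleigh principle, `v ⬝ᵥ M v ≤ λ₁ (v ⬝ᵥ v)` for every `v`, where
`M = R⁻¹ (1 + P HᵀH) R⁻¹` (`rayleigh_le_of_eigenvalue_le`). Take `v = R g⊥`. Since `g⊥` is
orthogonal to `g`, it is fixed by `R * R = 1 + P g gᵀ`, so `v` is a unit vector, and the
Rayleigh quotient there is `g⊥ ⬝ᵥ (1 + P HᵀH) g⊥ = 1 + P ‖H g⊥‖²`. Invertibility of `H` makes
`‖H g⊥‖²` positive, which gives the strict inequality.
-/

/-- An upper bound for all eigenvalues of a real symmetric matrix bounds its Rayleigh quotient: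
`c • 1 - M` is symmetric with nonnegative eigenvalues, hence positive semidefinite. -/
lemma rayleigh_le_of_eigenvalue_le {n : Type*} [Fintype n] [DecidableEq n] {M : Matrix n n ℝ}
    (hM : M.IsHermitian) {c : ℝ}
    (hc : ∀ (μ : ℝ) (v : n → ℝ), v ≠ 0 → M *ᵥ v = μ • v → μ ≤ c) (v : n → ℝ) :
    v ⬝ᵥ M *ᵥ v ≤ c * (v ⬝ᵥ v) := by
  have hN : (c • (1 : Matrix n n ℝ) - M).IsHermitian := by
    refine IsHermitian.sub ?_ hM
    simp [IsHermitian, conjTranspose_smul]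
  have hpos : (c • (1 : Matrix n n ℝ) - M).PosSemidef := by
    rw [hN.posSemidef_iff_eigenvalues_nonneg]
    intro i
    have h := hN.mulVec_eigenvectorBasis i
    have hne : (hN.eigenvectorBasis i).ofLp ≠ 0 := by
      intro h0
      exact hN.eigenvectorBasis.orthonormal.ne_zero i (by ext j; simpa using congrFun h0 j)
    have h2 := hc (c - hN.eigenvalues i) _ hne (by
      rw [sub_mulVec, smul_mulVec, one_mulVec] at h
      rw [sub_smul, ← h, sub_sub_cancel])
    simpa using h2
  have h := hpos.dotProduct_mulVec_nonneg v
  simp only [star_trivial, sub_mulVec, smul_mulVec, one_mulVec, dotProduct_sub, dotProduct_smul,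
    smul_eq_mul] at h
  linarith

/-- Let `H` be invertible 2×2, `g ≠ 0`, `P > 0`, let `R` be the symmetric positive
definite square root of `B = I + P g gᵀ`, and let `λ₁` be the largest eigenvalue of
`R⁻¹ (I + P HᵀH) R⁻¹ = B^{-1/2}(I + P HᵀH)B^{-1/2}`. If `g⊥` is a unit vector
orthogonal to `g`, then `λ₁ ≥ 1 + P ‖H g⊥‖²` and in particular `λ₁ > 1`. -/
theorem stmt4 (H R : Matrix (Fin 2) (Fin 2) ℝ) (g gp : Fin 2 → ℝ) (P lam1 : ℝ)
    (hH : IsUnit H.det) (hg : g ≠ 0) (hP : 0 < P)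
    (hR : R.PosDef) (hRB : R * R = 1 + P • vecMulVec g g)
    (hlam : IsGreatest {μ : ℝ | ∃ v : Fin 2 → ℝ, v ≠ 0 ∧
      (R⁻¹ * (1 + P • (Hᵀ * H)) * R⁻¹).mulVec v = μ • v} lam1)
    (hgp : gp ⬝ᵥ gp = 1) (horth : g ⬝ᵥ gp = 0) :
    1 + P * (H.mulVec gp ⬝ᵥ H.mulVec gp) ≤ lam1 ∧ 1 < lam1 := by
  have hdet : IsUnit R.det := hR.det_pos.ne'.isUnit
  have hRt : Rᵀ = R := by simpa [IsHermitian] using hR.isHermitian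
  have hM : (R⁻¹ * (1 + P • (Hᵀ * H)) * R⁻¹).IsHermitian := by
    simp [IsHermitian, conjTranspose_eq_transpose_of_trivial, transpose_mul, transpose_nonsing_inv,
      hRt, Matrix.mul_assoc]
  have hray := rayleigh_le_of_eigenvalue_le hM
    (fun μ v hv h => hlam.2 ⟨v, hv, h⟩) (R *ᵥ gp)
  have hmove : ∀ w : Fin 2 → ℝ, (R *ᵥ gp) ⬝ᵥ w = gp ⬝ᵥ (R *ᵥ w) := by
    intro w
    rw [dotProduct_mulVec, ← mulVec_transpose, hRt]
  have hnorm : (R *ᵥ gp) ⬝ᵥ (R *ᵥ gp) = 1 := by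
    rw [hmove, mulVec_mulVec, hRB, add_mulVec, one_mulVec, smul_mulVec, vecMulVec_mulVec, horth]
    simpa using hgp
  have hquot : (R *ᵥ gp) ⬝ᵥ ((R⁻¹ * (1 + P • (Hᵀ * H)) * R⁻¹) *ᵥ (R *ᵥ gp))
      = 1 + P * (H *ᵥ gp ⬝ᵥ H *ᵥ gp) := by
    rw [hmove, mulVec_mulVec, mulVec_mulVec, Matrix.mul_assoc R, Matrix.mul_assoc _ R⁻¹ R,
      nonsing_inv_mul R hdet, Matrix.mul_one, mul_nonsing_inv_cancel_left _ _ hdet, add_mulVec,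
      one_mulVec, smul_mulVec, dotProduct_add, hgp, dotProduct_smul, ← mulVec_mulVec,
      dotProduct_mulVec gp Hᵀ, vecMul_transpose, smul_eq_mul]
  rw [hnorm, hquot, mul_one] at hray
  have hgp0 : gp ≠ 0 := by
    rintro rfl
    simp at hgp
  have hHgp : H *ᵥ gp ≠ 0 := fun h => hgp0 (eq_zero_of_mulVec_eq_zero hH.ne_zero h)
  have hpos : 0 < H *ᵥ gp ⬝ᵥ H *ᵥ gp := by
    simpa using dotProduct_star_self_pos_iff.mpr hHgp
  exact ⟨hray, by nlinarith [mul_pos hP hpos]⟩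
end

section
/- Let H be an invertible 2×2 real matrix, g ∈ ℝ² with gᵀ(HᵀH)⁻¹g > 1, and v ∈ ℝ² with gᵀ(HᵀH)⁻¹v ≠ 0. For a real number α ≠ 0 define f(α) = (1 − ‖H^{-T}(α v + g)‖²) / α². Then f(α) = −vᵀ(HᵀH)⁻¹v − (2/α)·gᵀ(HᵀH)⁻¹v − (1/α²)·(gᵀ(HᵀH)⁻¹g − 1), and the value α* determined by 1/α* = gᵀ(HᵀH)⁻¹v / (1 − gᵀ(HᵀH)⁻¹g) satisfies α* ≠ 0 and f(α) ≤ f(α*) for every real α ≠ 0. -/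
/-!
Write `⟨x, y⟩ = xᵀ(HᵀH)⁻¹y`. Since `(HᵀH)⁻¹ = H⁻¹H^{-T}`, this equals the dot product of `H^{-T}x`
and `H^{-T}y`, and expanding `‖H^{-T}(α v + g)‖²` gives the formula for `f`. In the variable
`t = 1/α` the function is a concave quadratic with leading coefficient `-(⟨g, g⟩ - 1)` and vertex
`s = 1/α*`, so `f(α*) - f(α) = (⟨g, g⟩ - 1) (t - s)² ≥ 0`.
-/

open Matrix

/-- The form `xᵀ(HᵀH)⁻¹y` is the dot product of `H^{-T}x` and `H^{-T}y`. No invertibility is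
needed, since `(A * B)⁻¹ = B⁻¹ * A⁻¹` also holds for the junk value of the matrix inverse. -/
lemma dotProduct_gram_inv_mulVec (H : Matrix (Fin 2) (Fin 2) ℝ) (x y : Fin 2 → ℝ) :
    x ⬝ᵥ (Hᵀ * H)⁻¹.mulVec y = (Hᵀ)⁻¹.mulVec x ⬝ᵥ (Hᵀ)⁻¹.mulVec y := by
  rw [Matrix.mul_inv_rev, ← Matrix.mulVec_mulVec, Matrix.dotProduct_mulVec,
    ← Matrix.transpose_nonsing_inv, Matrix.mulVec_transpose, Matrix.mulVec_transpose]

/-- Let `H` be invertible 2×2, `g` with `gᵀ(HᵀH)⁻¹g > 1`, and `v` with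
`gᵀ(HᵀH)⁻¹v ≠ 0`. For `α ≠ 0` put `f(α) = (1 − ‖H^{-T}(α v + g)‖²)/α²`. Then
`f(α) = −vᵀ(HᵀH)⁻¹v − (2/α) gᵀ(HᵀH)⁻¹v − (1/α²)(gᵀ(HᵀH)⁻¹g − 1)`, and the `α*`
with `1/α* = gᵀ(HᵀH)⁻¹v / (1 − gᵀ(HᵀH)⁻¹g)` is nonzero and maximizes `f` over
all nonzero `α`. -/
theorem stmt5 (H : Matrix (Fin 2) (Fin 2) ℝ) (g v : Fin 2 → ℝ) (alphas : ℝ)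
    (hH : IsUnit H.det)
    (hg : 1 < g ⬝ᵥ (Hᵀ * H)⁻¹.mulVec g)
    (hv : g ⬝ᵥ (Hᵀ * H)⁻¹.mulVec v ≠ 0)
    (halphas : 1 / alphas =
      (g ⬝ᵥ (Hᵀ * H)⁻¹.mulVec v) / (1 - g ⬝ᵥ (Hᵀ * H)⁻¹.mulVec g)) :
    let f : ℝ → ℝ := fun α =>
      (1 - ((Hᵀ)⁻¹.mulVec (α • v + g) ⬝ᵥ (Hᵀ)⁻¹.mulVec (α • v + g))) / α ^ 2
    (∀ α : ℝ, α ≠ 0 →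
        f α = -(v ⬝ᵥ (Hᵀ * H)⁻¹.mulVec v)
          - (2 / α) * (g ⬝ᵥ (Hᵀ * H)⁻¹.mulVec v)
          - (1 / α ^ 2) * (g ⬝ᵥ (Hᵀ * H)⁻¹.mulVec g - 1))
    ∧ alphas ≠ 0
    ∧ ∀ α : ℝ, α ≠ 0 → f α ≤ f alphas := by
  intro f
  have formula : ∀ α : ℝ, α ≠ 0 →
      f α = -(v ⬝ᵥ (Hᵀ * H)⁻¹.mulVec v)
        - (2 / α) * (g ⬝ᵥ (Hᵀ * H)⁻¹.mulVec v)
        - (1 / α ^ 2) * (g ⬝ᵥ (Hᵀ * H)⁻¹.mulVec g - 1) := by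
    intro α hα
    simp only [f, dotProduct_gram_inv_mulVec, Matrix.mulVec_add, Matrix.mulVec_smul,
      add_dotProduct, dotProduct_add, smul_dotProduct, dotProduct_smul, smul_eq_mul]
    rw [dotProduct_comm ((Hᵀ)⁻¹.mulVec v) ((Hᵀ)⁻¹.mulVec g)]
    field_simp
    ring
  have hne : 1 - g ⬝ᵥ (Hᵀ * H)⁻¹.mulVec g ≠ 0 := by linarith
  have h0 : alphas ≠ 0 := by
    rintro rfl
    -- `1 / 0 = 0`, whereas the right-hand side of `halphas` is nonzero.
    rw [div_zero] at halphas
    exact div_ne_zero hv hne halphas.symm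
  refine ⟨formula, h0, fun α hα => ?_⟩
  rw [formula α hα, formula alphas h0]
  rw [eq_div_iff hne] at halphas
  generalize g ⬝ᵥ (Hᵀ * H)⁻¹.mulVec g = G at *
  rw [← halphas]
  have key : 0 ≤ (G - 1) * (1 / α - 1 / alphas) ^ 2 :=
    mul_nonneg (by linarith) (sq_nonneg _)
  rw [← sub_nonneg]
  refine key.trans_eq ?_
  ring
end

section
/- Let H be an invertible 2×2 real matrix and g ∈ ℝ² with gᵀ(HᵀH)⁻¹g > 1. Let q ∈ ℝ² be a unit vector satisfying ‖H q‖ > |gᵀ q|, and let q⊥ ∈ ℝ² be a unit vector with qᵀ q⊥ = 0. Then (q⊥)ᵀ (HᵀH − g gᵀ)⁻¹ q⊥ < 0 (the matrix HᵀH − g gᵀ being invertible under the stated hypothesis). -/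
open Matrix

/-!
Write `M = HᵀH - g gᵀ`. For `2 × 2` matrices `M⁻¹ = adj M / det M`, and since `q⊥` is `q` rotated
by a right angle (up to sign), `(q⊥)ᵀ (adj M) q⊥ = qᵀ M q = ‖H q‖² - (gᵀ q)² > 0`. On the other
hand `det M = det (HᵀH) (1 - gᵀ (HᵀH)⁻¹ g) < 0`, so the quotient is negative.
-/

/-- The quadratic form of the inverse of a `2 × 2` matrix, via the adjugate. It also holds for
singular `A`, where both sides are `0`. -/
lemma quadForm_inv_fin_two (A : Matrix (Fin 2) (Fin 2) ℝ) (v : Fin 2 → ℝ) :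
    v ⬝ᵥ A⁻¹.mulVec v =
      (A 1 1 * v 0 ^ 2 - (A 0 1 + A 1 0) * (v 0 * v 1) + A 0 0 * v 1 ^ 2) / A.det := by
  rw [Matrix.inv_def, Matrix.adjugate_fin_two, Ring.inverse_eq_inv']
  simp [dotProduct, mulVec, Fin.sum_univ_two]
  ring

/-- Let `H` be invertible 2×2 and `g` with `gᵀ(HᵀH)⁻¹g > 1`. If `q` is a unit
vector with `‖H q‖ > |gᵀ q|` and `q⊥` is a unit vector orthogonal to `q`, then
`(q⊥)ᵀ (HᵀH − g gᵀ)⁻¹ q⊥ < 0`. -/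
theorem stmt7 (H : Matrix (Fin 2) (Fin 2) ℝ) (g q qp : Fin 2 → ℝ)
    (hH : IsUnit H.det) (hg : 1 < g ⬝ᵥ (Hᵀ * H)⁻¹.mulVec g)
    (hq : q ⬝ᵥ q = 1)
    (hHq : |g ⬝ᵥ q| < Real.sqrt (H.mulVec q ⬝ᵥ H.mulVec q))
    (hqp : qp ⬝ᵥ qp = 1) (horth : q ⬝ᵥ qp = 0) :
    qp ⬝ᵥ (Hᵀ * H - vecMulVec g g)⁻¹.mulVec qp < 0 := by
  have hdet : 0 < (Hᵀ * H).det := by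
    rw [det_mul, det_transpose]
    exact mul_self_pos.mpr hH.ne_zero
  have hpos : (g ⬝ᵥ q) ^ 2 < H.mulVec q ⬝ᵥ H.mulVec q := by
    rw [← sq_abs]
    exact (Real.lt_sqrt (abs_nonneg _)).mp hHq
  rw [quadForm_inv_fin_two, one_lt_div hdet] at hg
  rw [quadForm_inv_fin_two]
  simp only [dotProduct, Fin.sum_univ_two] at hq hqp horth
  -- These three identities say that `qp = ± (-q 1, q 0)`, without choosing the sign.
  have h0 : qp 0 ^ 2 = q 1 ^ 2 := by
    linear_combination (-qp 0 ^ 2) * hq + q 1 ^ 2 * hqp + (q 0 * qp 0 - q 1 * qp 1) * horth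
  have h1 : qp 1 ^ 2 = q 0 ^ 2 := by
    linear_combination (-qp 1 ^ 2) * hq + q 0 ^ 2 * hqp + (q 1 * qp 1 - q 0 * qp 0) * horth
  have h01 : qp 0 * qp 1 = -(q 0 * q 1) := by
    linear_combination (-qp 0 * qp 1) * hq - q 0 * q 1 * hqp +
      (q 0 * qp 1 + q 1 * qp 0) * horth
  rw [h0, h1, h01]
  apply div_neg_of_pos_of_neg
  · simp [dotProduct, mulVec, Matrix.mul_apply, vecMulVec_apply, Fin.sum_univ_two] at hpos ⊢
    linarith
  · rw [det_fin_two] at hg ⊢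
    simp [Matrix.mul_apply, vecMulVec_apply, Fin.sum_univ_two] at hg ⊢
    linarith
end

section
/- Let H be an invertible 2×2 real matrix and g ∈ ℝ² with gᵀ(HᵀH)⁻¹g > 1 (so that HᵀH − g gᵀ is invertible). Let q⊥ ∈ ℝ² be a nonzero vector with (q⊥)ᵀ(HᵀH − g gᵀ)⁻¹ q⊥ < 0, and set θ = −1 / ((q⊥)ᵀ(HᵀH − g gᵀ)⁻¹ q⊥) > 0. Then the matrix A = HᵀH + θ·q⊥ (q⊥)ᵀ is (symmetric positive definite, hence) invertible and gᵀ A⁻¹ g = 1. -/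
open Matrix

/-!
By the matrix determinant lemma, `det (B + c • u uᵀ) = det B * (1 + c * uᵀ B⁻¹ u)` for invertible
`B`. Writing `M = HᵀH`, the matrix `M - g gᵀ + θ • q qᵀ = A - g gᵀ` is a rank-one update of both
`M - g gᵀ` and `A`. Seen from `M - g gᵀ`, the choice of `θ` makes its determinant vanish; seen
from `A`, this says `det A * (1 - gᵀ A⁻¹ g) = 0`, and `det A ≠ 0` since `A` is the sum of a positive
definite and a positive semidefinite matrix.
-/

/-- Matrix determinant lemma for a scaled symmetric rank-one update. -/
lemma det_add_smul_vecMulVec_self (B : Matrix (Fin 2) (Fin 2) ℝ) (hB : IsUnit B.det) (c : ℝ)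
    (u : Fin 2 → ℝ) :
    (B + c • vecMulVec u u).det = B.det * (1 + c * (u ⬝ᵥ B⁻¹.mulVec u)) := by
  have h := det_add_replicateCol_mul_replicateRow (ι := Unit) hB (c • u) u
  rw [← vecMulVec_eq, smul_vecMulVec] at h
  rw [h, det_unique (n := Unit), Matrix.add_apply, Matrix.one_apply_eq, Matrix.mul_assoc,
    ← replicateCol_mulVec, mulVec_smul, replicateRow_mul_replicateCol_apply, dotProduct_smul, smul_eq_mul]

/-- Let `H` be invertible 2×2 and `g` with `gᵀ(HᵀH)⁻¹g > 1` (so `HᵀH − g gᵀ` is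
invertible). If `q⊥ ≠ 0` satisfies `(q⊥)ᵀ(HᵀH − g gᵀ)⁻¹q⊥ < 0` and
`θ = −1/((q⊥)ᵀ(HᵀH − g gᵀ)⁻¹q⊥) > 0`, then `A = HᵀH + θ q⊥(q⊥)ᵀ` is symmetric
positive definite, hence invertible, and `gᵀ A⁻¹ g = 1`. -/
theorem stmt9 (H : Matrix (Fin 2) (Fin 2) ℝ) (g qp : Fin 2 → ℝ)
    (hH : IsUnit H.det) (hg : 1 < g ⬝ᵥ (Hᵀ * H)⁻¹.mulVec g)
    (hqp : qp ≠ 0)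
    (hneg : qp ⬝ᵥ (Hᵀ * H - vecMulVec g g)⁻¹.mulVec qp < 0) :
    let θ : ℝ := -1 / (qp ⬝ᵥ (Hᵀ * H - vecMulVec g g)⁻¹.mulVec qp)
    let A : Matrix (Fin 2) (Fin 2) ℝ := Hᵀ * H + θ • vecMulVec qp qp
    0 < θ ∧ A.PosDef ∧ IsUnit A.det ∧ g ⬝ᵥ A⁻¹.mulVec g = 1 := by
  intro θ A
  have hθ : 0 < θ := div_pos_of_neg_of_neg (by norm_num) hneg
  have hM : (Hᵀ * H).PosDef := by
    have hinj : Function.Injective H.mulVec :=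
      mulVec_injective_of_isUnit ((isUnit_iff_isUnit_det H).2 hH)
    simpa using PosDef.conjTranspose_mul_self H hinj
  have hA : A.PosDef :=
    hM.add_posSemidef (PosSemidef.smul (by simpa using posSemidef_vecMulVec_self_star qp) hθ.le)
  have hAu : IsUnit A.det := hA.det_pos.ne'.isUnit
  refine ⟨hθ, hA, hAu, ?_⟩
  -- If this determinant were zero, the inverse would be the junk value `0`, contradicting `hneg`.
  have hB : IsUnit (Hᵀ * H - vecMulVec g g).det := by
    by_contra h
    rw [nonsing_inv_apply_not_isUnit _ h] at hneg
    simp at hneg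
  have h1 := det_add_smul_vecMulVec_self _ hB θ qp
  have h2 := det_add_smul_vecMulVec_self A hAu (-1) g
  have hθq : θ * (qp ⬝ᵥ (Hᵀ * H - vecMulVec g g)⁻¹.mulVec qp) = -1 :=
    div_mul_cancel₀ _ hneg.ne
  have heq : A + (-1 : ℝ) • vecMulVec g g = Hᵀ * H - vecMulVec g g + θ • vecMulVec qp qp := by
    simp only [A, neg_one_smul]
    abel
  rw [hθq, add_neg_cancel, mul_zero] at h1
  rw [heq, h1] at h2
  have h3 := (mul_eq_zero.1 h2.symm).resolve_left hAu.ne_zero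
  linarith
end

section
/- Let H be an invertible 2×2 real matrix, g ∈ ℝ² with gᵀ(HᵀH)⁻¹g > 1, and P > 0. Let λ₁ be the largest eigenvalue of (I + P·g gᵀ)^{-1/2}(I + P·HᵀH)(I + P·g gᵀ)^{-1/2} and let q_a be a unit vector with (I + P·g gᵀ)⁻¹(I + P·HᵀH) q_a = λ₁ q_a. Let q⊥ be a unit vector with q_aᵀ q⊥ = 0, assume (q⊥)ᵀ(HᵀH − g gᵀ)⁻¹ q⊥ < 0, and set θ = −1 / ((q⊥)ᵀ(HᵀH − g gᵀ)⁻¹ q⊥) > 0. Then the eigenvalues of the symmetric matrix M = (I + P·g gᵀ)^{-1/2}(I + P·HᵀH + P·θ·q⊥(q⊥)ᵀ)(I + P·g gᵀ)^{-1/2} are exactly λ₁ and 1; in particular, since λ₁ > 1, the largest eigenvalue of M equals λ₁, and hence sup over nonzero q ∈ ℝ² of (qᵀ(I + P·HᵀH + P·θ·q⊥(q⊥)ᵀ)q)/(qᵀ(I + P·g gᵀ)q) equals λ₁. -/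
open Matrix

/-!
Write `B = 1 + P g gᵀ`, `K = HᵀH - g gᵀ` and `C = B + P (K + θ q⊥ q⊥ᵀ)`. Eigenvectors `v` of
`M = R⁻¹ C R⁻¹` correspond to solutions `C u = μ B u` through `u = R⁻¹ v`, so everything is about
the pencil `(C, B)`.

Two solutions are explicit. Since `q_a ⊥ q⊥`, the rank-one term does not see `q_a`, hence
`C q_a = λ₁ B q_a`. With `w = K⁻¹ q⊥`, the choice of `θ` gives `(K + θ q⊥ q⊥ᵀ) w = 0`, hence
`C w = B w`. As `q⊥ · w < 0`, the vectors `q_a, w` form a basis of the plane.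

For `1 < λ₁`: the hypothesis on `g` says `det K < 0`. The vectors `q_a, w` are `K`-orthogonal and
`w · K w < 0`, so `q_a · K q_a ≥ 0`, while `P K q_a = (λ₁ - 1) B q_a`; invertibility of `K`
excludes `λ₁ = 1`. Then `q_a, w` are also `B`-orthogonal, which diagonalises both forms
(`pencil_spectrum`, `pencil_rayleigh`).
-/

lemma dot_symm {K : Matrix (Fin 2) (Fin 2) ℝ} (hK : Kᵀ = K) (x y : Fin 2 → ℝ) :
    x ⬝ᵥ K *ᵥ y = y ⬝ᵥ K *ᵥ x := by
  rw [dotProduct_mulVec, ← mulVec_transpose, hK, dotProduct_comm]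

/-- The matrix determinant lemma for a rank-one downdate, in dimension two. -/
lemma det_sub_rank_one (S : Matrix (Fin 2) (Fin 2) ℝ) (g : Fin 2 → ℝ) (hS : S.det ≠ 0) :
    (S - vecMulVec g g).det = S.det * (1 - g ⬝ᵥ S⁻¹ *ᵥ g) := by
  have h : S.det * (g ⬝ᵥ S⁻¹ *ᵥ g) = g ⬝ᵥ S.adjugate *ᵥ g := by
    rw [Matrix.inv_def, smul_mulVec, dotProduct_smul, Ring.inverse_eq_inv', smul_eq_mul,
      mul_inv_cancel_left₀ hS]
  rw [mul_sub, h]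
  simp [det_fin_two, adjugate_fin_two, vecMulVec_apply, mulVec, dotProduct, Fin.sum_univ_two]
  ring

/-- Gram determinant identity: the form of `K` on a pair of vectors has determinant
`det K · det[x, y]²`. -/
lemma gram_det {K : Matrix (Fin 2) (Fin 2) ℝ} (hK : Kᵀ = K) (x y : Fin 2 → ℝ) :
    (x ⬝ᵥ K *ᵥ x) * (y ⬝ᵥ K *ᵥ y) - (x ⬝ᵥ K *ᵥ y) ^ 2
      = K.det * (x 0 * y 1 - x 1 * y 0) ^ 2 := by
  have h : K 1 0 = K 0 1 := congrFun (congrFun hK 0) 1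
  simp [det_fin_two, mulVec, dotProduct, Fin.sum_univ_two, h]
  ring

/-- Two orthonormal vectors of the plane span it. -/
lemma orthonormal_expand {a p : Fin 2 → ℝ} (ha : a ⬝ᵥ a = 1) (hp : p ⬝ᵥ p = 1)
    (hap : a ⬝ᵥ p = 0) (q : Fin 2 → ℝ) : q = (a ⬝ᵥ q) • a + (p ⬝ᵥ q) • p := by
  simp only [dotProduct, Fin.sum_univ_two] at ha hp hap ⊢
  -- `p` is the quarter turn of `a`, up to the sign `d`.
  obtain ⟨d, hd⟩ : ∃ d, d = a 0 * p 1 - a 1 * p 0 := ⟨_, rfl⟩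
  have h0 : p 0 = -a 1 * d := by rw [hd]; linear_combination (-p 0) * ha + a 0 * hap
  have h1 : p 1 = a 0 * d := by rw [hd]; linear_combination (-p 1) * ha + a 1 * hap
  have hdd : d ^ 2 = 1 := by
    rw [h0, h1] at hp; linear_combination hp - d ^ 2 * ha
  ext i
  fin_cases i
  · simp [h0, h1]
    linear_combination (-q 0) * ha + (a 0 * a 1 * q 1 - a 1 ^ 2 * q 0) * hdd
  · simp [h0, h1]
    linear_combination (-q 1) * ha + (a 0 * a 1 * q 0 - a 0 ^ 2 * q 1) * hdd

/-- If `a, p` is an orthonormal basis and `w` is not orthogonal to `p`, then `a, w` is a basis. -/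
lemma basis_expand {a p w : Fin 2 → ℝ} (ha : a ⬝ᵥ a = 1) (hp : p ⬝ᵥ p = 1)
    (hap : a ⬝ᵥ p = 0) (hw : p ⬝ᵥ w ≠ 0) (q : Fin 2 → ℝ) :
    ∃ s t : ℝ, q = s • a + t • w := by
  refine ⟨a ⬝ᵥ q - (p ⬝ᵥ q) / (p ⬝ᵥ w) * (a ⬝ᵥ w), (p ⬝ᵥ q) / (p ⬝ᵥ w), ?_⟩
  have h1 := orthonormal_expand ha hp hap q
  have h2 := orthonormal_expand ha hp hap w
  ext i
  have e1 := congrFun h1 i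
  have e2 := congrFun h2 i
  simp only [Pi.add_apply, Pi.smul_apply, smul_eq_mul] at e1 e2 ⊢
  have h3 : (p ⬝ᵥ q) / (p ⬝ᵥ w) * (p ⬝ᵥ w) = p ⬝ᵥ q := div_mul_cancel₀ _ hw
  linear_combination e1 - (p ⬝ᵥ q) / (p ⬝ᵥ w) * e2 - p i * h3

/-- A pencil with a basis of solutions for `l` and `1` has no other generalised eigenvalue. -/
lemma pencil_spectrum {B C : Matrix (Fin 2) (Fin 2) ℝ} {a w u : Fin 2 → ℝ} {l μ : ℝ}
    (hB : Bᵀ = B) (hC : Cᵀ = C) (hBpos : ∀ q, q ≠ 0 → 0 < q ⬝ᵥ B *ᵥ q)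
    (hbasis : ∀ q : Fin 2 → ℝ, ∃ s t : ℝ, q = s • a + t • w)
    (ha : C *ᵥ a = l • B *ᵥ a) (hw : C *ᵥ w = B *ᵥ w) (hu0 : u ≠ 0)
    (hu : C *ᵥ u = μ • B *ᵥ u) : μ = l ∨ μ = 1 := by
  by_contra! hne
  obtain ⟨h1, h2⟩ := hne
  have e1 : a ⬝ᵥ B *ᵥ u = 0 := by
    have h := dot_symm hC a u
    rw [ha, hu, dotProduct_smul, dotProduct_smul, dot_symm hB u a, smul_eq_mul, smul_eq_mul] at h
    exact (mul_eq_zero.mp (by linear_combination h : (μ - l) * (a ⬝ᵥ B *ᵥ u) = 0)).resolve_left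
      (sub_ne_zero.mpr h1)
  have e2 : w ⬝ᵥ B *ᵥ u = 0 := by
    have h := dot_symm hC w u
    rw [hw, hu, dotProduct_smul, dot_symm hB u w, smul_eq_mul] at h
    exact (mul_eq_zero.mp (by linear_combination h : (μ - 1) * (w ⬝ᵥ B *ᵥ u) = 0)).resolve_left
      (sub_ne_zero.mpr h2)
  obtain ⟨s, t, hq⟩ := hbasis u
  have hpos := hBpos u hu0
  have : u ⬝ᵥ B *ᵥ u = s * (a ⬝ᵥ B *ᵥ u) + t * (w ⬝ᵥ B *ᵥ u) := by
    have h := congrArg (· ⬝ᵥ B *ᵥ u) hq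
    simpa only [add_dotProduct, smul_dotProduct, smul_eq_mul] using h
  rw [this, e1, e2] at hpos
  simp at hpos

/-- If the basis solutions for `l ≥ 1` and `1` are `B`-orthogonal, then `C ≤ l B` as forms. -/
lemma pencil_rayleigh {B C : Matrix (Fin 2) (Fin 2) ℝ} {a w : Fin 2 → ℝ} {l : ℝ}
    (hB : Bᵀ = B) (hBpos : ∀ q, q ≠ 0 → 0 < q ⬝ᵥ B *ᵥ q)
    (hbasis : ∀ q : Fin 2 → ℝ, ∃ s t : ℝ, q = s • a + t • w)
    (ha : C *ᵥ a = l • B *ᵥ a) (hw : C *ᵥ w = B *ᵥ w) (hw0 : w ≠ 0)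
    (horth : w ⬝ᵥ B *ᵥ a = 0) (hl : 1 ≤ l) (q : Fin 2 → ℝ) :
    q ⬝ᵥ C *ᵥ q ≤ l * (q ⬝ᵥ B *ᵥ q) := by
  obtain ⟨s, t, rfl⟩ := hbasis q
  have horth' : a ⬝ᵥ B *ᵥ w = 0 := by rw [dot_symm hB, horth]
  simp only [mulVec_add, mulVec_smul, ha, hw, dotProduct_add, add_dotProduct, smul_dotProduct,
    dotProduct_smul, smul_eq_mul, horth, horth']
  have := mul_nonneg (mul_nonneg (sub_nonneg.mpr hl) (sq_nonneg t)) (hBpos w hw0).le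
  linarith

/-- Eigenvectors of `R⁻¹ C R⁻¹` are the images under `R` of solutions of the pencil
`(C, R²)`. -/
lemma eigen_iff_pencil {R C : Matrix (Fin 2) (Fin 2) ℝ} (hR : IsUnit R.det) (μ : ℝ) :
    (∃ v : Fin 2 → ℝ, v ≠ 0 ∧ (R⁻¹ * C * R⁻¹) *ᵥ v = μ • v) ↔
      ∃ u : Fin 2 → ℝ, u ≠ 0 ∧ C *ᵥ u = μ • (R * R) *ᵥ u := by
  constructor
  · rintro ⟨v, hv, h⟩
    refine ⟨R⁻¹ *ᵥ v, fun h0 => hv ?_, ?_⟩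
    · have := congrArg (R *ᵥ ·) h0
      simpa only [mulVec_mulVec, mul_nonsing_inv R hR, one_mulVec, mulVec_zero] using this
    · have := congrArg (R *ᵥ ·) h
      simp only [mulVec_mulVec, mulVec_smul] at this ⊢
      rw [← mul_assoc, ← mul_assoc, mul_nonsing_inv R hR, one_mul] at this
      rw [this, mul_assoc, mul_nonsing_inv R hR, mul_one]
  · rintro ⟨u, hu, h⟩
    refine ⟨R *ᵥ u, fun h0 => hu ?_, ?_⟩
    · have := congrArg (R⁻¹ *ᵥ ·) h0
      simpa only [mulVec_mulVec, nonsing_inv_mul R hR, one_mulVec, mulVec_zero] using this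
    · rw [mulVec_mulVec, mul_assoc, nonsing_inv_mul R hR, mul_one, ← mulVec_mulVec, h,
        mulVec_smul, mulVec_mulVec, ← mul_assoc, nonsing_inv_mul R hR, one_mul]

/-- Let `H` be invertible 2×2, `g` with `gᵀ(HᵀH)⁻¹g > 1`, `P > 0`, let `R` be the
symmetric positive definite square root of `B = I + P g gᵀ`, and let `λ₁` be the
largest eigenvalue of `R⁻¹(I + P HᵀH)R⁻¹` with `B⁻¹(I + P HᵀH) q_a = λ₁ q_a` for
a unit vector `q_a`. Let `q⊥` be a unit vector orthogonal to `q_a` with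
`(q⊥)ᵀ(HᵀH − g gᵀ)⁻¹q⊥ < 0`, and `θ = −1/((q⊥)ᵀ(HᵀH − g gᵀ)⁻¹q⊥) > 0`. Then the
eigenvalues of `M = R⁻¹(I + P HᵀH + P θ q⊥(q⊥)ᵀ)R⁻¹` are exactly `λ₁` and `1`;
since `λ₁ > 1`, the largest eigenvalue of `M` is `λ₁`, and the supremum over
nonzero `q` of the Rayleigh quotient
`(qᵀ(I + P HᵀH + P θ q⊥(q⊥)ᵀ)q)/(qᵀ(I + P g gᵀ)q)` equals (and is attained at) `λ₁`. -/
theorem stmt11 (H R : Matrix (Fin 2) (Fin 2) ℝ) (g qa qp : Fin 2 → ℝ) (P lam1 : ℝ)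
    (hH : IsUnit H.det) (hg : 1 < g ⬝ᵥ (Hᵀ * H)⁻¹.mulVec g) (hP : 0 < P)
    (hR : R.PosDef) (hRB : R * R = 1 + P • vecMulVec g g)
    (hlam : IsGreatest {μ : ℝ | ∃ v : Fin 2 → ℝ, v ≠ 0 ∧
      (R⁻¹ * (1 + P • (Hᵀ * H)) * R⁻¹).mulVec v = μ • v} lam1)
    (hqa : qa ⬝ᵥ qa = 1)
    (hqae : ((1 + P • vecMulVec g g)⁻¹ * (1 + P • (Hᵀ * H))).mulVec qa = lam1 • qa)
    (hqp : qp ⬝ᵥ qp = 1) (horth : qa ⬝ᵥ qp = 0)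
    (hneg : qp ⬝ᵥ (Hᵀ * H - vecMulVec g g)⁻¹.mulVec qp < 0) :
    let θ : ℝ := -1 / (qp ⬝ᵥ (Hᵀ * H - vecMulVec g g)⁻¹.mulVec qp)
    let M : Matrix (Fin 2) (Fin 2) ℝ :=
      R⁻¹ * (1 + P • (Hᵀ * H) + (P * θ) • vecMulVec qp qp) * R⁻¹
    0 < θ
    ∧ {μ : ℝ | ∃ v : Fin 2 → ℝ, v ≠ 0 ∧ M.mulVec v = μ • v} = {lam1, 1}
    ∧ 1 < lam1
    ∧ IsGreatest {μ : ℝ | ∃ v : Fin 2 → ℝ, v ≠ 0 ∧ M.mulVec v = μ • v} lam1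
    ∧ IsGreatest {r : ℝ | ∃ q : Fin 2 → ℝ, q ≠ 0 ∧
        r = (q ⬝ᵥ (1 + P • (Hᵀ * H) + (P * θ) • vecMulVec qp qp).mulVec q)
          / (q ⬝ᵥ (1 + P • vecMulVec g g).mulVec q)} lam1 := by
  intro θ M
  have hRdet : IsUnit R.det := hR.det_pos.ne'.isUnit
  obtain ⟨K, hKdef⟩ : ∃ K, K = Hᵀ * H - vecMulVec g g := ⟨_, rfl⟩
  obtain ⟨B, hBdef⟩ : ∃ B, B = 1 + P • vecMulVec g g := ⟨_, rfl⟩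
  obtain ⟨w, hwdef⟩ : ∃ w, w = K⁻¹ *ᵥ qp := ⟨_, rfl⟩
  obtain ⟨C, hCdef⟩ : ∃ C, C = 1 + P • (Hᵀ * H) + (P * θ) • vecMulVec qp qp := ⟨_, rfl⟩
  have hpw : qp ⬝ᵥ w < 0 := by rw [hwdef, hKdef]; exact hneg
  have hθ : θ = -1 / (qp ⬝ᵥ w) := by rw [hwdef, hKdef]
  have hM : M = R⁻¹ * C * R⁻¹ := by rw [hCdef]
  clear_value θ M
  rw [← hBdef] at hRB hqae
  rw [← hBdef, ← hCdef, hM]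
  have hKt : Kᵀ = K := by rw [hKdef]; simp [transpose_vecMulVec]
  have hBt : Bᵀ = B := by rw [hBdef]; simp [transpose_vecMulVec]
  have hCt : Cᵀ = C := by rw [hCdef]; simp [transpose_vecMulVec]
  have hBunit : IsUnit B.det := by rw [← hRB, det_mul]; exact hRdet.mul hRdet
  have hBpos : ∀ q, q ≠ 0 → 0 < q ⬝ᵥ B *ᵥ q := by
    intro q hq
    have h1 : 0 < q ⬝ᵥ q := by
      have h := dotProduct_star_self_pos_iff (v := q)
      simpa using h.mpr hq
    have h2 : q ⬝ᵥ B *ᵥ q = q ⬝ᵥ q + P * (g ⬝ᵥ q) ^ 2 := by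
      rw [hBdef]
      simp [mulVec, vecMulVec_apply, dotProduct, Fin.sum_univ_two]
      ring
    rw [h2]
    positivity
  have hKdet : K.det < 0 := by
    have hSpos : 0 < (Hᵀ * H).det := by
      rw [det_mul, det_transpose]
      exact mul_self_pos.mpr hH.ne_zero
    rw [hKdef, det_sub_rank_one _ _ hSpos.ne']
    exact mul_neg_of_pos_of_neg hSpos (by linarith)
  have hKunit : IsUnit K.det := hKdet.ne.isUnit
  have hKw : K *ᵥ w = qp := by
    rw [hwdef, mulVec_mulVec, mul_nonsing_inv K hKunit, one_mulVec]
  have hA : 1 + P • (Hᵀ * H) = B + P • K := by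
    rw [hBdef, hKdef, smul_sub]; abel
  have hqa0 : qa ≠ 0 := by rintro rfl; simp at hqa
  have hw0 : w ≠ 0 := by rintro rfl; simp at hpw
  have hAqa : (B + P • K) *ᵥ qa = lam1 • B *ᵥ qa := by
    have h := congrArg (B *ᵥ ·) hqae
    simp only [mulVec_mulVec, mulVec_smul] at h
    rwa [← mul_assoc, mul_nonsing_inv B hBunit, one_mul, hA] at h
  have hC : C = B + P • K + (P * θ) • vecMulVec qp qp := by rw [hCdef, hA]
  have hCqa : C *ᵥ qa = lam1 • B *ᵥ qa := by
    rw [hC, add_mulVec, hAqa, smul_mulVec, vecMulVec_mulVec, dotProduct_comm, horth]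
    simp
  have hCw : C *ᵥ w = B *ᵥ w := by
    have h : P + P * θ * (qp ⬝ᵥ w) = 0 := by
      rw [hθ, mul_assoc, div_mul_cancel₀ _ hpw.ne]; ring
    rw [hC, add_mulVec, add_mulVec, smul_mulVec, smul_mulVec, hKw, vecMulVec_mulVec, add_assoc]
    ext i
    simp only [Pi.add_apply, Pi.smul_apply, MulOpposite.smul_eq_mul_unop, MulOpposite.unop_op,
      smul_eq_mul]
    linear_combination qp i * h
  have hPK : P • K *ᵥ qa = (lam1 - 1) • B *ᵥ qa := by
    rw [sub_smul, one_smul, ← hAqa, add_mulVec, smul_mulVec]; abel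
  have hwKa : w ⬝ᵥ K *ᵥ qa = 0 := by rw [dot_symm hKt, hKw, horth]
  have hl : 1 < lam1 := by
    have hne : lam1 ≠ 1 := by
      rintro rfl
      rw [sub_self, zero_smul] at hPK
      have h0 : K *ᵥ qa = 0 := (smul_eq_zero.mp hPK).resolve_left hP.ne'
      have h := congrArg (K⁻¹ *ᵥ ·) h0
      simp only [mulVec_mulVec, nonsing_inv_mul K hKunit, one_mulVec, mulVec_zero] at h
      exact hqa0 h
    have hG := gram_det hKt w qa
    rw [hwKa, hKw, dotProduct_comm w qp] at hG
    have hform : 0 ≤ qa ⬝ᵥ K *ᵥ qa := by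
      by_contra! hlt
      have h1 := mul_pos_of_neg_of_neg hpw hlt
      have h2 := mul_nonneg (neg_nonneg.mpr hKdet.le) (sq_nonneg (w 0 * qa 1 - w 1 * qa 0))
      linarith
    have h3 := congrArg (qa ⬝ᵥ ·) hPK
    simp only [dotProduct_smul, smul_eq_mul] at h3
    have h4 : 0 ≤ (lam1 - 1) * (qa ⬝ᵥ B *ᵥ qa) := h3 ▸ mul_nonneg hP.le hform
    have h5 := nonneg_of_mul_nonneg_left h4 (hBpos qa hqa0)
    exact lt_of_le_of_ne (by linarith) hne.symm
  have hwBa : w ⬝ᵥ B *ᵥ qa = 0 := by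
    have h := congrArg (w ⬝ᵥ ·) hPK
    simp only [dotProduct_smul, smul_eq_mul, hwKa, mul_zero] at h
    exact (mul_eq_zero.mp h.symm).resolve_left (by linarith)
  have hbasis := basis_expand hqa hqp horth hpw.ne
  have hspec : {μ : ℝ | ∃ v : Fin 2 → ℝ, v ≠ 0 ∧ (R⁻¹ * C * R⁻¹).mulVec v = μ • v}
      = {lam1, 1} := by
    ext μ
    rw [Set.mem_ofPred_eq, eigen_iff_pencil hRdet, hRB]
    constructor
    · rintro ⟨u, hu0, hu⟩
      exact pencil_spectrum hBt hCt hBpos hbasis hCqa hCw hu0 hu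
    · rintro (rfl | rfl)
      · exact ⟨qa, hqa0, hCqa⟩
      · exact ⟨w, hw0, by rw [hCw, one_smul]⟩
  refine ⟨hθ ▸ div_pos_of_neg_of_neg (by norm_num) hpw, hspec, hl, ?_, ?_, ?_⟩
  · rw [hspec]
    refine ⟨Or.inl rfl, ?_⟩
    rintro _ (rfl | rfl)
    exacts [le_rfl, hl.le]
  · refine ⟨qa, hqa0, ?_⟩
    rw [hCqa, dotProduct_smul, smul_eq_mul, mul_div_cancel_right₀ _ (hBpos qa hqa0).ne']
  · rintro _ ⟨q, hq, rfl⟩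
    rw [div_le_iff₀ (hBpos q hq)]
    exact pencil_rayleigh hBt hBpos hbasis hCqa hCw hw0 hwBa hl.le q
end

section
/- Let H be an invertible 2×2 real matrix, g ∈ ℝ² with gᵀ(HᵀH)⁻¹g > 1, and P > 0. Let λ₁ be the largest eigenvalue of (I + P·g gᵀ)^{-1/2}(I + P·HᵀH)(I + P·g gᵀ)^{-1/2}. Then the maximum over all 2×2 positive semidefinite matrices S with tr(S) ≤ P of the quantity (1/2)·log det(I + H S Hᵀ) − (1/2)·log(1 + gᵀ S g) equals (1/2)·log λ₁, and it is attained by the rank-one matrix S = P·q_a q_aᵀ, where q_a is a unit vector satisfying (I + P·g gᵀ)⁻¹(I + P·HᵀH) q_a = λ₁ q_a. -/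
open Matrix

/-!
Write `A = HᵀH`, `B = I + P g gᵀ` and `M = λ₁ B - (I + P A)`. Maximality of `λ₁` makes `M` positive
semidefinite, and `q_a` is a nonzero kernel vector of `M`, so `det M = 0`. The bound to prove is
`det (I + H S Hᵀ) = 1 + tr (A S) + det A · det S ≤ λ₁ (1 + gᵀ S g)`; eliminating `A` from the trace
term and using `tr S ≤ P` and `λ₁ ≥ 1`, it follows from `P · det A · det S ≤ tr (M S)`.

* Evaluating `M` at the vector orthogonal to `g` gives `(λ₁ - 1) ‖g‖² ≥ P gᵀ (adj A) g > 0`, hence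
  `λ₁ > 1`; non-degradedness reads `gᵀ (adj A) g > det A`. Expanding `det M = 0` gives
  `(λ₁ - 1) (tr M - (λ₁ - 1)) = P² (λ₁ gᵀ (adj A) g - det A)`, so `tr M ≥ P² det A`
  (`sq_mul_det_le_trace`).
* Cayley–Hamilton for `S` gives `tr S · tr (M S) = tr (M S²) + tr M · det S ≥ tr M · det S`.

Together, `P² det A det S ≤ tr M det S ≤ P tr (M S)` (`det_le_of_trace_le`). Equality at
`S = P q_a q_aᵀ` is `q_aᵀ M q_a = 0`.

The two estimates are carried out in coordinates, with `A = !![p, q; q, r]`, `g = (s, t)` and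
`S = !![x, y; y, z]`.
-/

/-- `λ₁ > 1`, from the positivity of `λ₁ B - (I + P A)` at the vector `(-t, s)` orthogonal to `g`. -/
lemma one_lt_of_nonneg_form {p q r s t P l : ℝ} (hP : 0 < P)
    (hA : 0 < p * r - q ^ 2)
    (hg : p * r - q ^ 2 < r * s ^ 2 - 2 * q * s * t + p * t ^ 2)
    (hM : ∀ u v : ℝ, 0 ≤ (l * (1 + P * s ^ 2) - 1 - P * p) * u ^ 2
      + 2 * (l * P * s * t - P * q) * u * v + (l * (1 + P * t ^ 2) - 1 - P * r) * v ^ 2) :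
    1 < l := by
  have h := hM (-t) s
  have h1 : 0 < P * (r * s ^ 2 - 2 * q * s * t + p * t ^ 2) := mul_pos hP (hA.trans hg)
  have h2 : 0 < (l - 1) * (s ^ 2 + t ^ 2) := by nlinarith
  by_contra hl
  nlinarith [sq_nonneg s, sq_nonneg t, mul_nonneg (sub_nonneg.2 (not_lt.1 hl))
    (add_nonneg (sq_nonneg s) (sq_nonneg t))]

/-- The estimate `P² det A ≤ tr M`, where the hypothesis `hdet` is `det M = 0`. -/
lemma sq_mul_det_le_trace {p q r s t P l : ℝ} (hl : 1 < l)
    (hg : p * r - q ^ 2 < r * s ^ 2 - 2 * q * s * t + p * t ^ 2)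
    (hdet : (l * (1 + P * s ^ 2) - 1 - P * p) * (l * (1 + P * t ^ 2) - 1 - P * r)
      - (l * P * s * t - P * q) ^ 2 = 0) :
    P ^ 2 * (p * r - q ^ 2)
      ≤ (l * (1 + P * s ^ 2) - 1 - P * p) + (l * (1 + P * t ^ 2) - 1 - P * r) := by
  set T := (l * (1 + P * s ^ 2) - 1 - P * p) + (l * (1 + P * t ^ 2) - 1 - P * r) with hT
  set D := p * r - q ^ 2 with hD
  set G := r * s ^ 2 - 2 * q * s * t + p * t ^ 2 with hG
  have key : (l - 1) * (T - (l - 1)) = P ^ 2 * (l * G - D) := by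
    rw [hT, hD, hG]; linear_combination hdet
  have h1 : P ^ 2 * (l * D - D) ≤ P ^ 2 * (l * G - D) := by
    gcongr
  have h2 : (l - 1) * (P ^ 2 * D) ≤ (l - 1) * (T - (l - 1)) := by linarith
  have h3 := le_of_mul_le_mul_left h2 (sub_pos.2 hl)
  linarith

/-- The upper bound `det (I + H S Hᵀ) ≤ λ₁ (1 + gᵀ S g)` in coordinates. -/
lemma det_le_of_trace_le {p q r s t P l x y z : ℝ} (hP : 0 < P) (hl : 1 < l)
    (hM : ∀ u v : ℝ, 0 ≤ (l * (1 + P * s ^ 2) - 1 - P * p) * u ^ 2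
      + 2 * (l * P * s * t - P * q) * u * v + (l * (1 + P * t ^ 2) - 1 - P * r) * v ^ 2)
    (htr : P ^ 2 * (p * r - q ^ 2)
      ≤ (l * (1 + P * s ^ 2) - 1 - P * p) + (l * (1 + P * t ^ 2) - 1 - P * r))
    (hS : 0 ≤ x * z - y ^ 2) (hx : 0 ≤ x) (hz : 0 ≤ z) (hxz : x + z ≤ P) :
    1 + (p * x + 2 * q * y + r * z) + (p * r - q ^ 2) * (x * z - y ^ 2)
      ≤ l * (1 + (s ^ 2 * x + 2 * s * t * y + t ^ 2 * z)) := by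
  -- `hM` at the columns of `S` sums to `tr (M S²) ≥ 0`.
  have c1 := hM x y
  have c2 := hM y z
  have heq : P * (l * (s ^ 2 * x + 2 * s * t * y + t ^ 2 * z) - (p * x + 2 * q * y + r * z))
      = (l * (1 + P * s ^ 2) - 1 - P * p) * x + 2 * (l * P * s * t - P * q) * y
        + (l * (1 + P * t ^ 2) - 1 - P * r) * z - (l - 1) * (x + z) := by ring
  set a := l * (1 + P * s ^ 2) - 1 - P * p
  set b := l * P * s * t - P * q
  set c := l * (1 + P * t ^ 2) - 1 - P * r
  have hCH : (a + c) * (x * z - y ^ 2) ≤ (x + z) * (a * x + 2 * b * y + c * z) := by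
    nlinarith
  have h1 : P ^ 2 * (p * r - q ^ 2) * (x * z - y ^ 2) ≤ (a + c) * (x * z - y ^ 2) :=
    mul_le_mul_of_nonneg_right htr hS
  have ha : 0 ≤ a := by simpa using hM 1 0
  have hc : 0 ≤ c := by simpa using hM 0 1
  have hMS : 0 ≤ a * x + 2 * b * y + c * z := by
    have h0 : 0 ≤ (x + z) * (a * x + 2 * b * y + c * z) :=
      le_trans (mul_nonneg (add_nonneg ha hc) hS) hCH
    rcases (add_nonneg hx hz).eq_or_lt with h | h
    · have hx0 : x = 0 := by linarith
      have hz0 : z = 0 := by linarith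
      subst hx0 hz0
      have hy0 : y = 0 := by
        have : y ^ 2 = 0 := le_antisymm (by linarith) (sq_nonneg y)
        simpa using this
      simp [hy0]
    · exact nonneg_of_mul_nonneg_right h0 h
  have h2 : P * (P * (p * r - q ^ 2) * (x * z - y ^ 2)) ≤ P * (a * x + 2 * b * y + c * z) := by
    calc _ = P ^ 2 * (p * r - q ^ 2) * (x * z - y ^ 2) := by ring
      _ ≤ _ := h1.trans hCH
      _ ≤ _ := mul_le_mul_of_nonneg_right hxz hMS
  have h3 := le_of_mul_le_mul_left h2 hP
  have h4 : (l - 1) * (x + z) ≤ (l - 1) * P := mul_le_mul_of_nonneg_left hxz (by linarith)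
  refine le_of_mul_le_mul_left ?_ hP
  nlinarith

/-- If `l` bounds the eigenvalues of `R⁻¹ A R⁻¹` then `l R² - A` is positive semidefinite. -/
lemma posSemidef_of_eigenvalue_le {A R : Matrix (Fin 2) (Fin 2) ℝ} {l : ℝ}
    (hA : A.IsHermitian) (hR : R.PosDef)
    (hl : l ∈ upperBounds {μ : ℝ | ∃ v : Fin 2 → ℝ, v ≠ 0 ∧
      (R⁻¹ * A * R⁻¹).mulVec v = μ • v}) :
    (l • (R * R) - A).PosSemidef := by
  have hRi : R⁻¹.IsHermitian := hR.isHermitian.inv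
  have hdet : IsUnit R.det := hR.det_pos.ne'.isUnit
  have hC : (R⁻¹ * A * R⁻¹).IsHermitian := by
    have h := isHermitian_conjTranspose_mul_mul R⁻¹ hA
    rwa [hRi.eq] at h
  have hD : (l • (1 : Matrix (Fin 2) (Fin 2) ℝ) - R⁻¹ * A * R⁻¹).IsHermitian :=
    (isHermitian_one.smul (star_trivial l)).sub hC
  have hps : (l • (1 : Matrix (Fin 2) (Fin 2) ℝ) - R⁻¹ * A * R⁻¹).PosSemidef := by
    rw [hD.posSemidef_iff_eigenvalues_nonneg]
    intro i
    have hv := hD.mulVec_eigenvectorBasis i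
    have hne : (hD.eigenvectorBasis i).ofLp ≠ 0 := by
      intro h
      have h1 := hD.eigenvectorBasis.orthonormal.ne_zero i
      exact h1 (by ext j; simpa using congrFun h j)
    have hmem := hl ⟨(hD.eigenvectorBasis i).ofLp, hne, (show _ = (l - hD.eigenvalues i) • _ by
      rw [sub_mulVec, smul_mulVec, one_mulVec] at hv
      rw [sub_smul, ← hv]; abel)⟩
    simpa using hmem
  have h := hps.conjTranspose_mul_mul_same R
  rw [hR.isHermitian.eq] at h
  convert h using 1
  rw [mul_sub, sub_mul]
  congr 1
  · simp
  · rw [mul_assoc, mul_assoc, nonsing_inv_mul _ hdet, mul_one,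
      mul_nonsing_inv_cancel_left _ _ hdet]

/-- Let `H` be invertible 2×2, `g` with `gᵀ(HᵀH)⁻¹g > 1`, `P > 0`, let `R` be the
symmetric positive definite square root of `B = I + P g gᵀ`, and let `λ₁` be the
largest eigenvalue of `R⁻¹(I + P HᵀH)R⁻¹`. Then the maximum over positive
semidefinite `S` with `tr S ≤ P` of
`(1/2) log det(I + H S Hᵀ) − (1/2) log(1 + gᵀ S g)` equals `(1/2) log λ₁`, and is
attained by the rank-one matrix `S = P q_a q_aᵀ`, where `q_a` is a unit vector
with `B⁻¹(I + P HᵀH) q_a = λ₁ q_a`. -/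
theorem stmt14 (H R : Matrix (Fin 2) (Fin 2) ℝ) (g qa : Fin 2 → ℝ) (P lam1 : ℝ)
    (hH : IsUnit H.det) (hg : 1 < g ⬝ᵥ (Hᵀ * H)⁻¹.mulVec g) (hP : 0 < P)
    (hR : R.PosDef) (hRB : R * R = 1 + P • vecMulVec g g)
    (hlam : IsGreatest {μ : ℝ | ∃ v : Fin 2 → ℝ, v ≠ 0 ∧
      (R⁻¹ * (1 + P • (Hᵀ * H)) * R⁻¹).mulVec v = μ • v} lam1)
    (hqa : qa ⬝ᵥ qa = 1)
    (hqae : ((1 + P • vecMulVec g g)⁻¹ * (1 + P • (Hᵀ * H))).mulVec qa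
      = lam1 • qa) :
    IsGreatest {r : ℝ | ∃ S : Matrix (Fin 2) (Fin 2) ℝ,
        S.PosSemidef ∧ S.trace ≤ P ∧
        r = (1 / 2) * Real.log ((1 + H * S * Hᵀ).det)
          - (1 / 2) * Real.log (1 + g ⬝ᵥ S.mulVec g)}
      ((1 / 2) * Real.log lam1)
    ∧ (1 / 2) * Real.log ((1 + H * (P • vecMulVec qa qa) * Hᵀ).det)
        - (1 / 2) * Real.log (1 + g ⬝ᵥ (P • vecMulVec qa qa).mulVec g)
      = (1 / 2) * Real.log lam1 := by
  have hAh : (1 + P • (Hᵀ * H)).IsHermitian := by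
    have h1 : (Hᵀ * H).IsHermitian := by
      simpa using isHermitian_conjTranspose_mul_self H
    exact isHermitian_one.add (h1.smul (star_trivial P))
  have hMps := posSemidef_of_eigenvalue_le hAh hR hlam.2
  have hBu : IsUnit (1 + P • vecMulVec g g).det := by
    rw [← hRB, det_mul]
    exact (mul_pos hR.det_pos hR.det_pos).ne'.isUnit
  have hker : (lam1 • (1 + P • vecMulVec g g) - (1 + P • (Hᵀ * H))).mulVec qa = 0 := by
    have h := congrArg (fun v => (1 + P • vecMulVec g g).mulVec v) hqae
    simp only [mulVec_mulVec, mul_nonsing_inv_cancel_left _ _ hBu, mulVec_smul] at h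
    rw [sub_mulVec, smul_mulVec, h, sub_self]
  rw [hRB] at hMps
  have hqne : qa ≠ 0 := by
    rintro rfl
    simp at hqa
  have hdetM := exists_mulVec_eq_zero_iff.1 ⟨qa, hqne, hker⟩
  have hHd : H.det ≠ 0 := hH.ne_zero
  have hHd2 : 0 < H.det ^ 2 := by positivity
  rw [det_fin_two] at hHd2
  set p := H 0 0 ^ 2 + H 1 0 ^ 2 with hp
  set q := H 0 0 * H 0 1 + H 1 0 * H 1 1 with hq
  set r := H 0 1 ^ 2 + H 1 1 ^ 2 with hr
  have hAdet : p * r - q ^ 2 = (H 0 0 * H 1 1 - H 0 1 * H 1 0) ^ 2 := by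
    rw [hp, hq, hr]; ring
  have hApos : 0 < p * r - q ^ 2 := by rw [hAdet]; exact hHd2
  have hA : Hᵀ * H = !![p, q; q, r] := by
    ext i j
    fin_cases i <;> fin_cases j <;> simp [mul_apply, Fin.sum_univ_two, hp, hq, hr] <;> ring
  have hgg : p * r - q ^ 2 < r * g 0 ^ 2 - 2 * q * g 0 * g 1 + p * g 1 ^ 2 := by
    rw [hA, inv_def, adjugate_fin_two_of, det_fin_two_of, Ring.inverse_eq_inv'] at hg
    simp [dotProduct, mulVec, Fin.sum_univ_two] at hg
    have h1 := mul_lt_mul_of_pos_left hg hApos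
    have hne : p * r - q * q ≠ 0 := by
      have := hApos.ne'
      rwa [sq] at this
    refine lt_of_eq_of_lt (mul_one _).symm (h1.trans_eq ?_)
    field_simp
    ring
  rw [hA] at hMps hdetM hker
  have hM : ∀ u v : ℝ, 0 ≤ (lam1 * (1 + P * g 0 ^ 2) - 1 - P * p) * u ^ 2
      + 2 * (lam1 * P * g 0 * g 1 - P * q) * u * v
      + (lam1 * (1 + P * g 1 ^ 2) - 1 - P * r) * v ^ 2 := by
    intro u v
    have h := hMps.dotProduct_mulVec_nonneg ![u, v]
    simp [dotProduct, mulVec, Fin.sum_univ_two, vecMulVec_apply] at h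
    refine h.trans_eq ?_
    ring
  have hdet : (lam1 * (1 + P * g 0 ^ 2) - 1 - P * p) * (lam1 * (1 + P * g 1 ^ 2) - 1 - P * r)
      - (lam1 * P * g 0 * g 1 - P * q) ^ 2 = 0 := by
    simp [det_fin_two, vecMulVec_apply] at hdetM
    linear_combination hdetM
  have hl : 1 < lam1 := one_lt_of_nonneg_form hP hApos hgg hM
  have htr := sq_mul_det_le_trace hl hgg hdet
  have hq2 : qa 0 ^ 2 + qa 1 ^ 2 = 1 := by
    simp [dotProduct, Fin.sum_univ_two] at hqa
    linarith
  have hval : (1 / 2) * Real.log ((1 + H * (P • vecMulVec qa qa) * Hᵀ).det)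
        - (1 / 2) * Real.log (1 + g ⬝ᵥ (P • vecMulVec qa qa).mulVec g)
      = (1 / 2) * Real.log lam1 := by
    have hden : 1 + g ⬝ᵥ (P • vecMulVec qa qa).mulVec g
        = 1 + P * (g 0 * qa 0 + g 1 * qa 1) ^ 2 := by
      simp [dotProduct, mulVec, Fin.sum_univ_two, vecMulVec_apply]
      ring
    have hpos : 0 < 1 + P * (g 0 * qa 0 + g 1 * qa 1) ^ 2 := by positivity
    have hnum : (1 + H * (P • vecMulVec qa qa) * Hᵀ).det
        = lam1 * (1 + P * (g 0 * qa 0 + g 1 * qa 1) ^ 2) := by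
      have e0 := congrFun hker 0
      have e1 := congrFun hker 1
      simp [dotProduct, mulVec, Fin.sum_univ_two, vecMulVec_apply] at e0 e1
      have h1 : (1 + H * (P • vecMulVec qa qa) * Hᵀ).det
          = 1 + P * (p * qa 0 ^ 2 + 2 * q * qa 0 * qa 1 + r * qa 1 ^ 2) := by
        simp [det_fin_two, mul_apply, Fin.sum_univ_two, vecMulVec_apply, hp, hq, hr]
        ring
      rw [h1]
      linear_combination (lam1 - 1) * hq2 - qa 0 * e0 - qa 1 * e1
    rw [hden, hnum, Real.log_mul (by linarith) hpos.ne']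
    ring
  refine ⟨⟨⟨P • vecMulVec qa qa, ?_, ?_, hval.symm⟩, ?_⟩, hval⟩
  · have h := (posSemidef_vecMulVec_self_star qa).smul hP.le
    simpa using h
  · rw [trace_smul, trace_vecMulVec, hqa]
    simp
  · rintro _ ⟨S, hS, hST, rfl⟩
    have hsym : S 1 0 = S 0 1 := by simpa using hS.isHermitian.apply 0 1
    have hSd : 0 ≤ S 0 0 * S 1 1 - S 0 1 ^ 2 := by
      have h := hS.det_nonneg
      rw [det_fin_two, hsym] at h
      linarith
    have hx : 0 ≤ S 0 0 := hS.diag_nonneg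
    have hz : 0 ≤ S 1 1 := hS.diag_nonneg
    rw [trace_fin_two] at hST
    have hmain := det_le_of_trace_le hP hl hM htr hSd hx hz hST
    have hnum : (1 + H * S * Hᵀ).det = 1 + (p * S 0 0 + 2 * q * S 0 1 + r * S 1 1)
        + (p * r - q ^ 2) * (S 0 0 * S 1 1 - S 0 1 ^ 2) := by
      simp [det_fin_two, mul_apply, Fin.sum_univ_two, hsym, hp, hq, hr]
      ring
    have hden : 1 + g ⬝ᵥ S.mulVec g
        = 1 + (g 0 ^ 2 * S 0 0 + 2 * g 0 * g 1 * S 0 1 + g 1 ^ 2 * S 1 1) := by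
      simp [dotProduct, mulVec, Fin.sum_univ_two, hsym]
      ring
    have hdpos : 0 < 1 + g ⬝ᵥ S.mulVec g := by
      have h := hS.dotProduct_mulVec_nonneg g
      simp only [star_trivial] at h
      linarith
    have hnpos : 0 < (1 + H * S * Hᵀ).det := by
      have h := hS.mul_mul_conjTranspose_same H
      rw [conjTranspose_eq_transpose_of_trivial] at h
      exact (PosDef.one.add_posSemidef h).det_pos
    have hle : (1 + H * S * Hᵀ).det ≤ lam1 * (1 + g ⬝ᵥ S.mulVec g) := by
      rw [hnum, hden]; exact hmain
    have hlog := Real.log_le_log hnpos hle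
    rw [Real.log_mul (by linarith) hdpos.ne'] at hlog
    linarith
end

section
/- Let H be an invertible 2×2 real matrix, g ∈ ℝ² with gᵀ(HᵀH)⁻¹g > 1, and P > 0. Let λ₁ be the largest eigenvalue of (I + P·g gᵀ)^{-1/2}(I + P·HᵀH)(I + P·g gᵀ)^{-1/2}, let q_a be a unit vector with (I + P·g gᵀ)⁻¹(I + P·HᵀH) q_a = λ₁ q_a, and let q⊥ be a unit vector with q_aᵀ q⊥ = 0. Assume gᵀ(HᵀH)⁻¹q⊥ ≠ 0, define α* by 1/α* = gᵀ(HᵀH)⁻¹q⊥ / (1 − gᵀ(HᵀH)⁻¹g) and a* = H^{-T}(α* q⊥ + g), so that ‖a*‖ < 1. With N* = [[I, a*],[a*ᵀ, 1]] and H̄ = [H; gᵀ], define U(S) = (1/2)·log( det(I + (N*)⁻¹ H̄ S H̄ᵀ) / (1 + gᵀSg) ). Then the maximum of U(S) over all 2×2 positive semidefinite matrices S with tr(S) ≤ P equals (1/2)·log λ₁; consequently this upper bound coincides with the maximum of (1/2)·log det(I + H S Hᵀ) − (1/2)·log(1 + gᵀSg) over the same set, and both equal (1/2)·log λ₁. 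-/
/-!
Write `A = HᵀH`, `c = gᵀA⁻¹g`, `m = gᵀA⁻¹q⊥`, so that `α* = (1 - c) / m`.

Eliminating the noise covariance by its Schur complement (`det_one_add_noise`) gives
`U(S) = ½ log (det (1 + S M) / (1 + gᵀSg))` with `M = A + β q⊥q⊥ᵀ` and `β = α*² / (1 - ‖a*‖²)`.
Since `M ≥ A`, the achievable rate never exceeds `U`; since `M` and `A` agree on `q_a`, both
functions take the value `½ log λ₁` at `S = P q_a q_aᵀ`, by the eigenvector equation.
It remains to prove `‖a*‖ < 1` and `det (1 + S M) ≤ λ₁ (1 + gᵀSg)` for feasible `S`.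

Because `det (A - ggᵀ) = det A (1 - c) < 0`, the largest eigenvalue satisfies `λ₁ > 1`
(`one_lt_of_isGreatest`), and the eigenvector equation turns this into
`e = q_aᵀAq_a - (gᵀq_a)² > 0`. In the orthonormal basis `(q_a, q⊥)` one computes that `1 - ‖a*‖²`
is a positive multiple of `e`, and that `β` is exactly the number for which `M - ggᵀ` is singular
(`core_norm`). Hence `M` is the sum of `ggᵀ` and another rank-one matrix, and the inequality reduces
to the nonnegativity of an explicit expression (`core_ineq`).
-/

open Matrix

/-- A real quadratic with positive leading coefficient and a negative value at `1` has a root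
beyond `1`. -/
lemma exists_root_gt_one {a b c : ℝ} (ha : 0 < a) (h : a + b + c < 0) :
    ∃ x : ℝ, 1 < x ∧ a * x ^ 2 + b * x + c = 0 := by
  have hD : (2 * a + b) ^ 2 < b ^ 2 - 4 * a * c := by nlinarith
  have hs : (√(b ^ 2 - 4 * a * c)) ^ 2 = b ^ 2 - 4 * a * c :=
    Real.sq_sqrt ((sq_nonneg _).trans hD.le)
  have hlt : 2 * a + b < √(b ^ 2 - 4 * a * c) := Real.lt_sqrt_of_sq_lt hD
  refine ⟨(-b + √(b ^ 2 - 4 * a * c)) / (2 * a), ?_, ?_⟩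
  · rw [lt_div_iff₀ (by positivity)]; linarith
  · generalize √(b ^ 2 - 4 * a * c) = y at hs
    field_simp
    linear_combination hs

/-- The largest eigenvalue of `R⁻¹CR⁻¹` exceeds `1` once `det (C - R²) < 0`: the quadratic
`μ ↦ det (C - μR²)` is negative at `1`, so it has a root `μ > 1`, and `μ` is an eigenvalue. -/
lemma one_lt_of_isGreatest {R C : Matrix (Fin 2) (Fin 2) ℝ} {l : ℝ} (hR : R.PosDef)
    (hneg : (C - R * R).det < 0)
    (hl : IsGreatest {μ : ℝ | ∃ v : Fin 2 → ℝ, v ≠ 0 ∧ (R⁻¹ * C * R⁻¹).mulVec v = μ • v} l) :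
    1 < l := by
  have hRd : 0 < R.det := hR.det_pos
  have hRu : IsUnit R.det := hRd.ne'.isUnit
  set B := R * R with hB
  have hBd : 0 < B.det := by rw [hB, det_mul]; positivity
  obtain ⟨μ, hμ, hroot⟩ := exists_root_gt_one (a := B.det)
    (b := -(C 0 0 * B 1 1 + C 1 1 * B 0 0 - C 0 1 * B 1 0 - C 1 0 * B 0 1)) (c := C.det) hBd
    (by simp only [det_fin_two, Matrix.sub_apply] at hneg ⊢; linarith)
  have hdet : (C - μ • B).det = 0 := by
    rw [← hroot]
    simp only [det_fin_two, Matrix.sub_apply, Matrix.smul_apply, smul_eq_mul]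
    ring
  obtain ⟨v, hv, hCv⟩ := exists_mulVec_eq_zero_iff.mpr hdet
  have hCv' : C *ᵥ v = μ • (R *ᵥ (R *ᵥ v)) := by
    rw [sub_mulVec, smul_mulVec, sub_eq_zero] at hCv
    rw [hCv, hB, mulVec_mulVec]
  refine hμ.trans_le (hl.2 ⟨R *ᵥ v, fun h0 => hv ?_, ?_⟩)
  · exact eq_zero_of_mulVec_eq_zero hRd.ne' h0
  · rw [mulVec_mulVec, Matrix.mul_assoc, nonsing_inv_mul _ hRu, Matrix.mul_one, ← mulVec_mulVec,
      hCv', mulVec_smul, mulVec_mulVec, nonsing_inv_mul _ hRu, one_mulVec]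

/-- Expansion of `H̄ᵀN⁻¹H̄` by the Schur complement of the identity block of `N`, inserted in
the determinant through `det (1 + XY) = det (1 + YX)`. -/
lemma det_one_add_noise (H S : Matrix (Fin 2) (Fin 2) ℝ) (g a w : Fin 2 → ℝ) {n : ℝ}
    (hn : n = 1 - a ⬝ᵥ a) (hn0 : n ≠ 0) (hw : Hᵀ *ᵥ a = g - w) :
    ((1 : Matrix (Fin 2 ⊕ Unit) (Fin 2 ⊕ Unit) ℝ)
      + (Matrix.fromBlocks 1 (Matrix.of fun i (_ : Unit) => a i)
        (Matrix.of fun (_ : Unit) j => a j) 1 : Matrix (Fin 2 ⊕ Unit) (Fin 2 ⊕ Unit) ℝ)⁻¹ *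
      (Matrix.fromRows H (Matrix.of fun (_ : Unit) j => g j) * S *
        (Matrix.fromRows H (Matrix.of fun (_ : Unit) j => g j))ᵀ)).det
      = (1 + S * (Hᵀ * H + n⁻¹ • vecMulVec w w)).det := by
  set N : Matrix (Fin 2 ⊕ Unit) (Fin 2 ⊕ Unit) ℝ :=
    Matrix.fromBlocks 1 (Matrix.of fun i (_ : Unit) => a i)
        (Matrix.of fun (_ : Unit) j => a j) 1 with hN
  set Hbar : Matrix (Fin 2 ⊕ Unit) (Fin 2) ℝ :=
    Matrix.fromRows H (Matrix.of fun (_ : Unit) j => g j) with hHbar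
  have hw0 := congrFun hw 0
  have hw1 := congrFun hw 1
  simp only [mulVec, dotProduct, Fin.sum_univ_two, transpose_apply, Pi.sub_apply] at hw0 hw1 hn
  have hNdet : IsUnit N.det := by
    have : N.det = n := by
      rw [hN, det_fromBlocks_one₁₁, det_unique, hn]
      simp [Matrix.mul_apply, Fin.sum_univ_two]
    rw [this]; exact hn0.isUnit
  -- the solution `X` of `N X = H̄`
  set X : Matrix (Fin 2 ⊕ Unit) (Fin 2) ℝ :=
    Matrix.fromRows (H - n⁻¹ • vecMulVec a w) (Matrix.of fun (_ : Unit) j => n⁻¹ * w j) with hX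
  have hNX : N * X = Hbar := by
    ext i j
    rcases i with i | i
    · simp [hN, hX, hHbar, Matrix.mul_apply, vecMulVec_apply, Matrix.one_apply]
      ring
    · fin_cases j
      · simp [hN, hX, hHbar, Matrix.mul_apply, vecMulVec_apply, Fin.sum_univ_two]
        field_simp
        rw [hn] at hn0 ⊢
        linear_combination (1 - (a 0 * a 0 + a 1 * a 1)) * hw0
      · simp [hN, hX, hHbar, Matrix.mul_apply, vecMulVec_apply, Fin.sum_univ_two]
        field_simp
        rw [hn] at hn0 ⊢
        linear_combination (1 - (a 0 * a 0 + a 1 * a 1)) * hw1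
  have hXN : N⁻¹ * Hbar = X := by
    rw [← hNX, ← Matrix.mul_assoc, nonsing_inv_mul _ hNdet, Matrix.one_mul]
  have hM : Hbarᵀ * X = Hᵀ * H + n⁻¹ • vecMulVec w w := by
    ext i j
    fin_cases i
    · simp [hX, hHbar, Matrix.mul_apply, vecMulVec_apply, Fin.sum_univ_two]
      linear_combination (-n⁻¹ * w j) * hw0
    · simp [hX, hHbar, Matrix.mul_apply, vecMulVec_apply, Fin.sum_univ_two]
      linear_combination (-n⁻¹ * w j) * hw1
  rw [Matrix.mul_assoc Hbar, ← Matrix.mul_assoc, hXN, det_one_add_mul_comm, Matrix.mul_assoc, hM]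

/-- The optimisation inequality `det (1 + S M) ≤ λ (1 + gᵀSg)` in the orthonormal basis
`(q_a, q⊥)`. There `M = [[a₁₁, a₁₂], [a₁₂, a₂₂ + β]]`, and `hβ` says that `M - ggᵀ` is singular.
The difference of the two sides is `(l - 1) / P` times
`(P - s)(1 + g₂² r / h) + g₂² t² / h` with `h = 1 + P g₁²`. -/
lemma core_ineq {P l a11 a12 a22 g1 g2 s t r β : ℝ} (hP : 0 < P) (hl : 1 < l)
    (h1 : 1 + P * a11 = l * (1 + P * g1 ^ 2)) (h2 : a12 = l * (g1 * g2))
    (hβ : (a11 - g1 ^ 2) * (a22 + β - g2 ^ 2) = (a12 - g1 * g2) ^ 2)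
    (hr : 0 ≤ r) (hsr : s + r ≤ P) :
    1 + (s * a11 + 2 * t * a12 + r * (a22 + β)) + (s * r - t ^ 2) * (a11 * (a22 + β) - a12 ^ 2)
      ≤ l * (1 + (s * g1 ^ 2 + 2 * t * (g1 * g2) + r * g2 ^ 2)) := by
  have hh : 0 < 1 + P * g1 ^ 2 := by positivity
  have hl' : 0 < l - 1 := by linarith
  have ha : a11 = g1 ^ 2 + (l - 1) * (1 + P * g1 ^ 2) / P := by
    field_simp; linear_combination h1
  have hT : a22 + β = g2 ^ 2 + (l - 1) * P * (g1 * g2) ^ 2 / (1 + P * g1 ^ 2) := by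
    have he : a11 - g1 ^ 2 ≠ 0 := by
      rw [ha, add_sub_cancel_left]; positivity
    apply mul_left_cancel₀ he
    have : (a11 - g1 ^ 2) * (a22 + β) = (a12 - g1 * g2) ^ 2 + (a11 - g1 ^ 2) * g2 ^ 2 := by
      linear_combination hβ
    rw [this, ha, h2]
    field_simp
    ring
  have hnn : 0 ≤ (l - 1) / P * ((P - s) * (1 + g2 ^ 2 * r / (1 + P * g1 ^ 2))
      + g2 ^ 2 * t ^ 2 / (1 + P * g1 ^ 2)) := by
    have : 0 ≤ P - s := by linarith
    positivity
  refine le_of_sub_nonneg (hnn.trans_eq ?_)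
  rw [hT, ha, h2]
  field_simp
  ring

/-- The bound `‖a‖² < 1` and the singularity of `M - ggᵀ`, in the basis `(q_a, q⊥)`, where
`c = gᵀA⁻¹g`, `m = gᵀA⁻¹q⊥`, `k = q⊥ᵀA⁻¹q⊥` and `D = det A`.
Then `‖a‖² = α²k + 2αm + c`, and the lower right entry of `M` is `a₂₂ + α² / (1 - ‖a‖²)`. -/
lemma core_norm {a11 a12 a22 g1 g2 D c m k α : ℝ} (hD : 0 < D)
    (hDdef : D = a11 * a22 - a12 ^ 2)
    (hc : D * c = a22 * g1 ^ 2 - 2 * a12 * (g1 * g2) + a11 * g2 ^ 2)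
    (hm : D * m = a11 * g2 - a12 * g1) (hk : D * k = a11) (hc1 : 1 < c) (hm0 : m ≠ 0)
    (hα : α * m = 1 - c) (he : 0 < a11 - g1 ^ 2) :
    0 < 1 - (α ^ 2 * k + 2 * α * m + c) ∧
    (a11 - g1 ^ 2) * (a22 + (1 - (α ^ 2 * k + 2 * α * m + c))⁻¹ * α ^ 2 - g2 ^ 2)
      = (a12 - g1 * g2) ^ 2 := by
  have hm2 : 0 < m ^ 2 := by positivity
  have key : D * (m ^ 2 - (c - 1) * k) = a11 - g1 ^ 2 := by
    apply mul_left_cancel₀ hD.ne'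
    calc D * (D * (m ^ 2 - (c - 1) * k)) = (D * m) ^ 2 - (D * c - D) * (D * k) := by ring
      _ = D * (a11 - g1 ^ 2) := by rw [hc, hm, hk, hDdef]; ring
  set n := 1 - (α ^ 2 * k + 2 * α * m + c) with hn
  have hnm : D * m ^ 2 * n = (c - 1) * (a11 - g1 ^ 2) := by
    rw [← key, hn]
    linear_combination (-D * k * (α * m + 1 - c) - 2 * D * m ^ 2) * hα
  have hnpos : 0 < n := by
    have : 0 < D * m ^ 2 * n := by rw [hnm]; exact mul_pos (by linarith) he
    exact pos_of_mul_pos_right this (by positivity)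
  refine ⟨hnpos, ?_⟩
  have hβ : (a11 - g1 ^ 2) * (n⁻¹ * α ^ 2) = (c - 1) * D := by
    have h0 : (c - 1) ≠ 0 := by linarith
    field_simp
    apply mul_left_cancel₀ hm2.ne'
    linear_combination (a11 - g1 ^ 2) * (α * m + 1 - c) * hα - (c - 1) * hnm
  linear_combination hβ + hc - hDdef

lemma det_one_add_rot {Q S M : Matrix (Fin 2) (Fin 2) ℝ} (hQ : Q * Qᵀ = 1) (hQ' : Qᵀ * Q = 1) :
    (1 + S * M).det = (1 + (Qᵀ * S * Q) * (Qᵀ * M * Q)).det := by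
  have h : 1 + (Qᵀ * S * Q) * (Qᵀ * M * Q) = Qᵀ * (1 + S * M) * Q := by
    calc 1 + (Qᵀ * S * Q) * (Qᵀ * M * Q) = 1 + Qᵀ * S * (Q * Qᵀ) * M * Q := by noncomm_ring
      _ = Qᵀ * Q + Qᵀ * S * M * Q := by rw [hQ, hQ', Matrix.mul_one]
      _ = Qᵀ * (1 + S * M) * Q := by noncomm_ring
  have hd : Qᵀ.det * Q.det = 1 := by rw [← det_mul, hQ', det_one]
  rw [h, det_mul, det_mul]
  linear_combination (-(1 + S * M).det) * hd

lemma dot_rot {Q : Matrix (Fin 2) (Fin 2) ℝ} (hQ : Q * Qᵀ = 1)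
    (X : Matrix (Fin 2) (Fin 2) ℝ) (u v : Fin 2 → ℝ) :
    u ⬝ᵥ X *ᵥ v = (Qᵀ *ᵥ u) ⬝ᵥ (Qᵀ * X * Q) *ᵥ (Qᵀ *ᵥ v) := by
  rw [mulVec_mulVec, Matrix.mul_assoc, hQ, Matrix.mul_one, ← mulVec_mulVec,
    dotProduct_mulVec (Qᵀ *ᵥ u), ← mulVec_transpose, transpose_transpose, mulVec_mulVec, hQ, one_mulVec]

set_option maxHeartbeats 1000000 in
/-- Secrecy capacity of the 2-2-1 Gaussian MIMO wiretap channel. Let `H` be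
invertible 2×2, `g` with `gᵀ(HᵀH)⁻¹g > 1`, `P > 0`, `R` the symmetric positive
definite square root of `B = I + P g gᵀ`, `λ₁` the largest eigenvalue of
`R⁻¹(I + P HᵀH)R⁻¹`, `q_a` a unit vector with `B⁻¹(I + P HᵀH) q_a = λ₁ q_a`, and
`q⊥` a unit vector orthogonal to `q_a` with `gᵀ(HᵀH)⁻¹q⊥ ≠ 0`. Define `α*` by
`1/α* = gᵀ(HᵀH)⁻¹q⊥/(1 − gᵀ(HᵀH)⁻¹g)` and `a* = H^{-T}(α* q⊥ + g)`, so that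
`‖a*‖ < 1`. With `N* = [[I, a*],[a*ᵀ, 1]]`, `H̄ = [H; gᵀ]` and
`U(S) = (1/2) log( det(I + (N*)⁻¹ H̄ S H̄ᵀ)/(1 + gᵀSg) )`, the maximum of `U`
over positive semidefinite `S` with `tr S ≤ P` equals `(1/2) log λ₁`, and so does
the maximum of the achievable rate
`(1/2) log det(I + H S Hᵀ) − (1/2) log(1 + gᵀSg)`. -/
theorem stmt15 (H R : Matrix (Fin 2) (Fin 2) ℝ) (g qa qp : Fin 2 → ℝ)
    (P lam1 alphas : ℝ)
    (hH : IsUnit H.det) (hg : 1 < g ⬝ᵥ (Hᵀ * H)⁻¹.mulVec g) (hP : 0 < P)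
    (hR : R.PosDef) (hRB : R * R = 1 + P • vecMulVec g g)
    (hlam : IsGreatest {μ : ℝ | ∃ v : Fin 2 → ℝ, v ≠ 0 ∧
      (R⁻¹ * (1 + P • (Hᵀ * H)) * R⁻¹).mulVec v = μ • v} lam1)
    (hqa : qa ⬝ᵥ qa = 1)
    (hqae : ((1 + P • vecMulVec g g)⁻¹ * (1 + P • (Hᵀ * H))).mulVec qa
      = lam1 • qa)
    (hqp : qp ⬝ᵥ qp = 1) (horth : qa ⬝ᵥ qp = 0)
    (hgqp : g ⬝ᵥ (Hᵀ * H)⁻¹.mulVec qp ≠ 0)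
    (halphas : 1 / alphas =
      (g ⬝ᵥ (Hᵀ * H)⁻¹.mulVec qp) / (1 - g ⬝ᵥ (Hᵀ * H)⁻¹.mulVec g)) :
    let astar : Fin 2 → ℝ := (Hᵀ)⁻¹.mulVec (alphas • qp + g)
    let N : Matrix (Fin 2 ⊕ Unit) (Fin 2 ⊕ Unit) ℝ :=
      Matrix.fromBlocks 1 (Matrix.of fun i (_ : Unit) => astar i)
        (Matrix.of fun (_ : Unit) j => astar j) 1
    let Hbar : Matrix (Fin 2 ⊕ Unit) (Fin 2) ℝ :=
      Matrix.fromRows H (Matrix.of fun (_ : Unit) j => g j)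
    let U : Matrix (Fin 2) (Fin 2) ℝ → ℝ := fun S =>
      (1 / 2) * Real.log
        (((1 : Matrix (Fin 2 ⊕ Unit) (Fin 2 ⊕ Unit) ℝ)
            + N⁻¹ * (Hbar * S * Hbarᵀ)).det / (1 + g ⬝ᵥ S.mulVec g))
    Real.sqrt (astar ⬝ᵥ astar) < 1
    ∧ IsGreatest {r : ℝ | ∃ S : Matrix (Fin 2) (Fin 2) ℝ,
        S.PosSemidef ∧ S.trace ≤ P ∧ r = U S} ((1 / 2) * Real.log lam1)
    ∧ IsGreatest {r : ℝ | ∃ S : Matrix (Fin 2) (Fin 2) ℝ,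
        S.PosSemidef ∧ S.trace ≤ P ∧
        r = (1 / 2) * Real.log ((1 + H * S * Hᵀ).det)
          - (1 / 2) * Real.log (1 + g ⬝ᵥ S.mulVec g)}
      ((1 / 2) * Real.log lam1) := by
  intro astar N Hbar U
  set A : Matrix (Fin 2) (Fin 2) ℝ := Hᵀ * H with hA
  clear_value A
  have hHd : H.det ≠ 0 := hH.ne_zero
  have hAd : 0 < A.det := by
    rw [hA, det_mul, det_transpose, ← sq]; positivity
  have hAsymm : Aᵀ = A := by rw [hA, transpose_mul, transpose_transpose]
  -- the orthogonal matrix whose columns are `qa` and `qp`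
  set Q : Matrix (Fin 2) (Fin 2) ℝ := !![qa 0, qp 0; qa 1, qp 1] with hQdef
  simp only [dotProduct, Fin.sum_univ_two] at hqa hqp horth
  have hQ' : Qᵀ * Q = 1 := by
    ext i j
    fin_cases i <;> fin_cases j <;>
      simp [hQdef, Matrix.mul_apply, Fin.sum_univ_two] <;> linarith
  have hQ : Q * Qᵀ = 1 := mul_eq_one_comm.mp hQ'
  have hQinv : Q⁻¹ = Qᵀ := inv_eq_left_inv hQ'
  have hQtinv : Qᵀ⁻¹ = Q := inv_eq_left_inv hQ
  have hQe1 : Qᵀ *ᵥ qa = ![1, 0] := by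
    ext i
    fin_cases i <;> simp [hQdef, mulVec, dotProduct, Fin.sum_univ_two] <;> linarith
  have hQe2 : Qᵀ *ᵥ qp = ![0, 1] := by
    ext i
    fin_cases i <;> simp [hQdef, mulVec, dotProduct, Fin.sum_univ_two] <;> linarith
  set A' := Qᵀ * A * Q with hA'
  set g' := Qᵀ *ᵥ g with hg'
  have hA'symm : A' 1 0 = A' 0 1 := by
    have : A'ᵀ = A' := by
      rw [hA', transpose_mul, transpose_mul, transpose_transpose, hAsymm, Matrix.mul_assoc]
    exact congrFun (congrFun this 0) 1
  have hdQ : Qᵀ.det * Q.det = 1 := by rw [← det_mul, hQ', det_one]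
  have hA'd : A'.det = A.det := by
    rw [hA', det_mul, det_mul]; linear_combination A.det * hdQ
  have hDdef : A.det = A' 0 0 * A' 1 1 - A' 0 1 ^ 2 := by
    rw [← hA'd, det_fin_two, hA'symm]; ring
  have hA'inv : Qᵀ * A⁻¹ * Q = A'⁻¹ := by
    rw [hA', Matrix.mul_inv_rev, Matrix.mul_inv_rev, hQinv, hQtinv, Matrix.mul_assoc]
  -- the form `A'⁻¹` through the adjugate
  have hform : ∀ u v : Fin 2 → ℝ, A.det * (u ⬝ᵥ A⁻¹ *ᵥ v) =
      (Qᵀ *ᵥ u) 0 * (A' 1 1 * (Qᵀ *ᵥ v) 0 - A' 0 1 * (Qᵀ *ᵥ v) 1)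
      + (Qᵀ *ᵥ u) 1 * (-A' 0 1 * (Qᵀ *ᵥ v) 0 + A' 0 0 * (Qᵀ *ᵥ v) 1) := by
    intro u v
    rw [dot_rot hQ, hA'inv, inv_def, adjugate_fin_two, hA'd, Ring.inverse_eq_inv', smul_mulVec,
      dotProduct_smul, smul_eq_mul, mul_inv_cancel_left₀ hAd.ne', hA'symm]
    generalize Qᵀ *ᵥ u = u'
    generalize Qᵀ *ᵥ v = v'
    simp only [mulVec, dotProduct, Fin.sum_univ_two, of_apply, cons_val_zero, cons_val_one]
    ring
  have hc := hform g g
  have hm := hform g qp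
  have hk := hform qp qp
  rw [hQe2] at hm hk
  rw [← hg'] at hc hm
  simp only [cons_val_zero, cons_val_one, mul_zero, mul_one, zero_mul, one_mul, zero_sub,
    zero_add] at hm hk
  have hRd : 0 < R.det := hR.det_pos
  have hBu : IsUnit (1 + P • vecMulVec g g).det := by
    rw [← hRB, det_mul]; exact (mul_pos hRd hRd).ne'.isUnit
  have heig : (1 + P • A) *ᵥ qa = lam1 • ((1 + P • vecMulVec g g) *ᵥ qa) := by
    rw [← mulVec_smul, ← hqae, mulVec_mulVec, ← Matrix.mul_assoc, mul_nonsing_inv _ hBu,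
      Matrix.one_mul]
  have he0 := congrFun heig 0
  have he1 := congrFun heig 1
  simp [mulVec, dotProduct, Fin.sum_univ_two, vecMulVec_apply] at he0 he1
  have hg0 : g' 0 = qa 0 * g 0 + qa 1 * g 1 := by
    simp [hg', hQdef]
  have hg1 : g' 1 = qp 0 * g 0 + qp 1 * g 1 := by
    simp [hg', hQdef]
  have h1 : 1 + P * A' 0 0 = lam1 * (1 + P * g' 0 ^ 2) := by
    rw [hg0]
    simp [hA', hQdef, Matrix.mul_apply, Fin.sum_univ_two]
    linear_combination qa 0 * he0 + qa 1 * he1 + (lam1 - 1) * hqa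
  have h2 : A' 0 1 = lam1 * (g' 0 * g' 1) := by
    have hA10 : A' 1 0 = (qp 0 * A 0 0 + qp 1 * A 1 0) * qa 0
        + (qp 0 * A 0 1 + qp 1 * A 1 1) * qa 1 := by
      simp [hA', hQdef, Matrix.mul_apply, Fin.sum_univ_two]
    rw [← hA'symm, hg0, hg1, hA10]
    apply mul_left_cancel₀ hP.ne'
    linear_combination qp 0 * he0 + qp 1 * he1 + (lam1 - 1) * horth
  set c := g ⬝ᵥ A⁻¹ *ᵥ g with hcdef
  set m := g ⬝ᵥ A⁻¹ *ᵥ qp with hmdef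
  set k := qp ⬝ᵥ A⁻¹ *ᵥ qp with hkdef
  have hl : 1 < lam1 := by
    refine one_lt_of_isGreatest hR ?_ hlam
    rw [hRB]
    have hrot : (1 + P • A - (1 + P • vecMulVec g g)).det = P ^ 2 * (A.det * (1 - c)) := by
      have hloc : A.det * c = g 0 * (A 1 1 * g 0 - A 0 1 * g 1)
          + g 1 * (-A 1 0 * g 0 + A 0 0 * g 1) := by
        rw [hcdef, inv_def, adjugate_fin_two, Ring.inverse_eq_inv', smul_mulVec,
          dotProduct_smul, smul_eq_mul, mul_inv_cancel_left₀ hAd.ne']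
        simp only [mulVec, dotProduct, Fin.sum_univ_two, of_apply, cons_val_zero, cons_val_one]
        ring
      have hs : A 1 0 = A 0 1 := congrFun (congrFun hAsymm 0) 1
      rw [mul_sub, hloc, hs]
      simp [det_fin_two, vecMulVec_apply, hs]
      ring
    rw [hrot]
    exact mul_neg_of_pos_of_neg (by positivity) (mul_neg_of_pos_of_neg hAd (by linarith))
  have he : 0 < A' 0 0 - g' 0 ^ 2 := by
    have : P * (A' 0 0 - g' 0 ^ 2) = (lam1 - 1) * (1 + P * g' 0 ^ 2) := by
      linear_combination h1
    have h3 : 0 < P * (A' 0 0 - g' 0 ^ 2) := by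
      rw [this]; exact mul_pos (by linarith) (by positivity)
    exact pos_of_mul_pos_right h3 hP.le
  have hα : alphas * m = 1 - c := by
    have hc0 : 1 - c ≠ 0 := by linarith
    have hα0 : alphas ≠ 0 := by
      rintro rfl
      rw [div_zero] at halphas
      exact div_ne_zero hgqp hc0 halphas.symm
    field_simp at halphas
    linarith
  have hAinvsymm : (A⁻¹)ᵀ = A⁻¹ := by rw [transpose_nonsing_inv, hAsymm]
  have hnorm : astar ⬝ᵥ astar = alphas ^ 2 * k + 2 * alphas * m + c := by
    have hm' : qp ⬝ᵥ A⁻¹ *ᵥ g = m := by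
      rw [hmdef, dotProduct_mulVec, ← mulVec_transpose, hAinvsymm, dotProduct_comm]
    have : astar ⬝ᵥ astar = (alphas • qp + g) ⬝ᵥ A⁻¹ *ᵥ (alphas • qp + g) := by
      simp only [astar]
      rw [hA, Matrix.mul_inv_rev, ← mulVec_mulVec, dotProduct_mulVec (alphas • qp + g),
        ← mulVec_transpose, transpose_nonsing_inv]
    rw [this]
    simp only [mulVec_add, mulVec_smul, dotProduct_add, add_dotProduct, smul_dotProduct,
      dotProduct_smul, smul_eq_mul, hm', ← hcdef, ← hmdef, ← hkdef]
    ring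
  obtain ⟨hn, hβ⟩ := core_norm (a22 := A' 1 1) (g2 := g' 1) (a12 := A' 0 1) hAd hDdef
    (by linear_combination hc) (by linear_combination hm) hk hg hgqp hα he
  rw [← hnorm] at hn hβ
  set n := 1 - astar ⬝ᵥ astar with hndef
  have hw : Hᵀ *ᵥ astar = g - (-alphas) • qp := by
    simp only [astar]
    rw [mulVec_mulVec, mul_nonsing_inv _ (by rwa [det_transpose]), one_mulVec]
    module
  have hβ0 : 0 ≤ n⁻¹ * alphas ^ 2 := by positivity
  set β := n⁻¹ * alphas ^ 2 with hβdef
  -- below, a symmetric `S` enters only through the entries of `Qᵀ * S * Q`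
  have hQuad : ∀ S : Matrix (Fin 2) (Fin 2) ℝ, Sᵀ = S →
      (Qᵀ * S * Q) 1 0 = (Qᵀ * S * Q) 0 1 := by
    intro S hS
    have : (Qᵀ * S * Q)ᵀ = Qᵀ * S * Q := by
      rw [transpose_mul, transpose_mul, transpose_transpose, hS, Matrix.mul_assoc]
    exact congrFun (congrFun this 0) 1
  have hgS : ∀ S : Matrix (Fin 2) (Fin 2) ℝ, Sᵀ = S → g ⬝ᵥ S *ᵥ g =
      (Qᵀ * S * Q) 0 0 * g' 0 ^ 2 + 2 * (Qᵀ * S * Q) 0 1 * (g' 0 * g' 1)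
        + (Qᵀ * S * Q) 1 1 * g' 1 ^ 2 := by
    intro S hS
    rw [dot_rot hQ, ← hg']
    simp only [mulVec, dotProduct, Fin.sum_univ_two, hQuad S hS]
    ring
  have hdetA : ∀ S : Matrix (Fin 2) (Fin 2) ℝ, Sᵀ = S → ∀ b : ℝ,
      (1 + S * (A + b • vecMulVec qp qp)).det =
      1 + ((Qᵀ * S * Q) 0 0 * A' 0 0 + 2 * (Qᵀ * S * Q) 0 1 * A' 0 1
        + (Qᵀ * S * Q) 1 1 * (A' 1 1 + b))
        + ((Qᵀ * S * Q) 0 0 * (Qᵀ * S * Q) 1 1 - (Qᵀ * S * Q) 0 1 ^ 2)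
          * (A' 0 0 * (A' 1 1 + b) - A' 0 1 ^ 2) := by
    intro S hS b
    have hM : Qᵀ * (A + b • vecMulVec qp qp) * Q = A' + b • vecMulVec ![0, 1] ![0, 1] := by
      rw [Matrix.mul_add, Matrix.add_mul, ← hA', Matrix.mul_smul, Matrix.smul_mul,
        mul_vecMulVec, vecMulVec_mul, ← mulVec_transpose, hQe2]
    rw [det_one_add_rot hQ hQ', hM]
    have hS10 := hQuad S hS
    generalize Qᵀ * S * Q = S' at hS10 ⊢
    simp [det_fin_two, Matrix.mul_apply, Fin.sum_univ_two, hA'symm, hS10]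
    ring
  have hU : ∀ S : Matrix (Fin 2) (Fin 2) ℝ, U S = (1 / 2) * Real.log
      ((1 + S * (A + β • vecMulVec qp qp)).det / (1 + g ⬝ᵥ S *ᵥ g)) := by
    intro S
    have hrank : n⁻¹ • vecMulVec ((-alphas) • qp) ((-alphas) • qp) = β • vecMulVec qp qp := by
      ext i j
      simp only [Matrix.smul_apply, vecMulVec_apply, Pi.smul_apply, smul_eq_mul, hβdef]
      ring
    simp only [U, N, Hbar]
    rw [det_one_add_noise H S g astar ((-alphas) • qp) hndef hn.ne' hw, hrank, ← hA]
  have hdetH : ∀ S : Matrix (Fin 2) (Fin 2) ℝ, (1 + H * S * Hᵀ).det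
      = (1 + S * (A + (0 : ℝ) • vecMulVec qp qp)).det := by
    intro S
    rw [zero_smul, add_zero, Matrix.mul_assoc, det_one_add_mul_comm, Matrix.mul_assoc, hA]
  have hPSD : ∀ S : Matrix (Fin 2) (Fin 2) ℝ, S.PosSemidef → Sᵀ = S ∧
      0 ≤ (Qᵀ * S * Q) 0 0 ∧ 0 ≤ (Qᵀ * S * Q) 1 1 ∧
      0 ≤ (Qᵀ * S * Q) 0 0 * (Qᵀ * S * Q) 1 1 - (Qᵀ * S * Q) 0 1 ^ 2 ∧
      (Qᵀ * S * Q) 0 0 + (Qᵀ * S * Q) 1 1 = S.trace ∧ 0 < 1 + g ⬝ᵥ S *ᵥ g := by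
    intro S hS
    have hSt : Sᵀ = S := by simpa using hS.isHermitian.eq
    have hS' : (Qᵀ * S * Q).PosSemidef := by
      simpa using hS.conjTranspose_mul_mul_same Q
    have hdet := hS'.det_nonneg
    rw [det_fin_two, hQuad S hSt] at hdet
    refine ⟨hSt, hS'.diag_nonneg, hS'.diag_nonneg, by linarith, ?_, ?_⟩
    · rw [← trace_fin_two, trace_mul_comm, ← Matrix.mul_assoc, hQ, Matrix.one_mul]
    · have := hS.dotProduct_mulVec_nonneg g
      rw [star_trivial] at this
      linarith
  have hA00 : 0 ≤ A' 0 0 := by linarith [sq_nonneg (g' 0)]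
  have hApos : ∀ S : Matrix (Fin 2) (Fin 2) ℝ, S.PosSemidef →
      0 < (1 + H * S * Hᵀ).det := by
    intro S hS
    have h : (H * S * Hᵀ).PosSemidef := by
      simpa using hS.mul_mul_conjTranspose_same H
    exact (PosDef.one.add_posSemidef h).det_pos
  have hmono : ∀ S : Matrix (Fin 2) (Fin 2) ℝ, S.PosSemidef →
      (1 + H * S * Hᵀ).det ≤ (1 + S * (A + β • vecMulVec qp qp)).det := by
    intro S hS
    obtain ⟨hSt, hs, hr, hd, -, -⟩ := hPSD S hS
    rw [hdetH, hdetA S hSt, hdetA S hSt]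
    linarith [mul_nonneg hr hβ0, mul_nonneg hd (mul_nonneg hA00 hβ0)]
  have hub : ∀ S : Matrix (Fin 2) (Fin 2) ℝ, S.PosSemidef → S.trace ≤ P →
      (1 + S * (A + β • vecMulVec qp qp)).det ≤ lam1 * (1 + g ⬝ᵥ S *ᵥ g) := by
    intro S hS htr
    obtain ⟨hSt, hs, hr, hd, hst, -⟩ := hPSD S hS
    rw [hdetA S hSt, hgS S hSt]
    exact core_ineq hP hl h1 h2 hβ hr (by linarith)
  -- the maximiser: beamforming along `qa` with full power
  set S0 : Matrix (Fin 2) (Fin 2) ℝ := P • vecMulVec qa qa with hS0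
  have hS0psd : S0.PosSemidef := by
    have := (posSemidef_vecMulVec_self_star qa).smul hP.le
    simpa using this
  have hS0tr : S0.trace ≤ P := by
    simp [hS0, hqa]
  have hS0t := (hPSD S0 hS0psd).1
  have hrot0 : Qᵀ * S0 * Q = P • vecMulVec ![1, 0] ![1, 0] := by
    rw [hS0, Matrix.mul_smul, Matrix.smul_mul, mul_vecMulVec, vecMulVec_mul, ← mulVec_transpose,
      hQe1]
  have hatt : ∀ b : ℝ, (1 + S0 * (A + b • vecMulVec qp qp)).det
      = lam1 * (1 + g ⬝ᵥ S0 *ᵥ g) := by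
    intro b
    rw [hdetA S0 hS0t, hgS S0 hS0t, hrot0]
    simp
    linear_combination h1
  have hS0pos := (hPSD S0 hS0psd).2.2.2.2.2
  refine ⟨?_, ⟨⟨S0, hS0psd, hS0tr, ?_⟩, ?_⟩, ⟨⟨S0, hS0psd, hS0tr, ?_⟩, ?_⟩⟩
  · rw [Real.sqrt_lt' one_pos]; linarith
  · rw [hU, hatt, mul_div_assoc, div_self hS0pos.ne', mul_one]
  · rintro _ ⟨S, hS, htr, rfl⟩
    have hpos := (hPSD S hS).2.2.2.2.2
    have hdpos := (hApos S hS).trans_le (hmono S hS)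
    rw [hU]
    have := Real.log_le_log (div_pos hdpos hpos) ((div_le_iff₀ hpos).mpr (hub S hS htr))
    linarith
  · rw [hdetH, hatt, Real.log_mul (by linarith) hS0pos.ne']; ring
  · rintro _ ⟨S, hS, htr, rfl⟩
    have hpos := (hPSD S hS).2.2.2.2.2
    have := Real.log_le_log (hApos S hS) ((hmono S hS).trans (hub S hS htr))
    rw [Real.log_mul (by linarith) hpos.ne'] at this
    linarith
end
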